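/- Let n ≥ 1, let 1 < q₁ < q₂, let u₁, u₂ > 0 and suppose r := u₁q₁ − u₂q₂ > 0. Then for every measurable function f : ℝ^n → ℝ with 0 < a ≤ f ≤ b for some constants a, b, and every x ∈ ℝ^n, ( P_{u₂}( (P_r f)^{q₂} )(x) )^{1/q₂} ≤ ( P_{u₁}( f^{q₁} )(x) )^{1/q₁} · M^{n/2}, where M = ((q₁−1)/u₂)^{1−1/q₁} · ((q₂−1)/u₁)^{1/q₂−1} · ( (u₁q₁−u₂q₂)/(q₂−q₁) )^{1/q₂−1/q₁} (dimensional local hypercontractivity of the heat semigroup, i.e. the CD(0,n) hypercontractivity theorem applied to the Laplacian on ℝ^n). -/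

import Mathlib

open MeasureTheory Real

/-- Euclidean heat semigroup, with `heat n 0 f = f`. -/
noncomputable def heat (n : ℕ) (t : ℝ) (f : EuclideanSpace ℝ (Fin n) → ℝ)
    (x : EuclideanSpace ℝ (Fin n)) : ℝ :=
  if t = 0 then f x
  else (4 * π * t) ^ (-(n : ℝ) / 2) * ∫ y, f y * Real.exp (-‖x - y‖ ^ 2 / (4 * t))

/-!
After changes of Gaussian densities, and since `‖w‖_q` is the supremum of `∫ w * g ^ (1 - 1 / q)`
over `∫ g = 1`, the theorem is a case of the Gaussian inequality
`∫ f (A) ^ α * g (B) ^ β ≤ (∫ f (A)) ^ α * (∫ g (B)) ^ β`, where `A` and `B` are centred jointly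
Gaussian vectors of correlation at most `ρ` and `α β ρ² ≤ (1 - α) (1 - β)` (Nelson). That condition
says that the second derivative of `(x, y) ↦ x ^ α * y ^ β` is nonpositive on the covariances that
the gradients of `f (A)` and `g (B)` can have, and Jensen's inequality for such a function `φ` along
a Gaussian vector follows by halving the variance: splitting the vector into `2 ^ k` independent
pieces of size `2 ^ (-k / 2)`, each piece costs a third-order Taylor error, and
`2 ^ k * 2 ^ (-3 k / 2) → 0`.
-/

open ProbabilityTheory Filter
open scoped ENNReal NNReal Topology RealInnerProductSpace

section Taylor

variable {E F : Type*} [NormedAddCommGroup E] [NormedSpace ℝ E] [NormedAddCommGroup F]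
  [NormedSpace ℝ F] {s : Set E}

lemma norm_sub_sub_fderiv_le_of_lipschitzOnWith {f : E → F} {f' : E → E →L[ℝ] F} {L : ℝ≥0}
    (hs : Convex ℝ s) (hf : ∀ x ∈ s, HasFDerivAt f (f' x) x) (hf' : LipschitzOnWith L f' s)
    {x y : E} (hx : x ∈ s) (hy : y ∈ s) :
    ‖f y - f x - f' x (y - x)‖ ≤ L * ‖y - x‖ ^ 2 := by
  have hseg : segment ℝ x y ⊆ s := hs.segment_subset hx hy
  rw [pow_two, ← mul_assoc]
  refine (convex_segment x y).norm_image_sub_le_of_norm_hasFDerivWithin_le'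
    (fun w hw ↦ (hf w (hseg hw)).hasFDerivWithinAt) (fun w hw ↦ ?_)
    (left_mem_segment ℝ x y) (right_mem_segment ℝ x y)
  calc ‖f' w - f' x‖ ≤ L * ‖w - x‖ := hf'.norm_sub_le (hseg hw) hx
    _ ≤ L * ‖y - x‖ := by gcongr; exact norm_sub_le_of_mem_segment hw

lemma exists_norm_taylor_two_le {J : E → F} (hs : Convex ℝ s) (hs' : IsCompact s)
    (hJ : ∀ x ∈ s, ContDiffAt ℝ 3 J x) :
    ∃ L : ℝ≥0, ∀ x ∈ s, ∀ y ∈ s,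
      ‖J y - J x - fderiv ℝ J x (y - x) -
        (2⁻¹ : ℝ) • fderiv ℝ (fderiv ℝ J) x (y - x) (y - x)‖ ≤ L * ‖y - x‖ ^ 3 := by
  have hJ₁ : ∀ x ∈ s, ContDiffAt ℝ 2 (fderiv ℝ J) x :=
    fun x hx ↦ (hJ x hx).fderiv_right (by norm_num)
  obtain ⟨L, hL⟩ := ContDiffOn.exists_lipschitzOnWith
    (fun x hx ↦ ((hJ₁ x hx).fderiv_right (m := 1) (by norm_num)).contDiffWithinAt)
    one_ne_zero hs hs'
  refine ⟨L, fun x hx y hy ↦ ?_⟩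
  set B := fderiv ℝ (fderiv ℝ J) x
  have hsymm : ∀ v w, B v w = B w v :=
    ((hJ x hx).isSymmSndFDerivAt (by simp; norm_num)).eq
  have hseg : segment ℝ x y ⊆ s := hs.segment_subset hx hy
  have hderiv : ∀ w ∈ segment ℝ x y, HasFDerivAt
      (fun w ↦ J w - (2⁻¹ : ℝ) • B (w - x) (w - x)) (fderiv ℝ J w - B (w - x)) w := by
    intro w hw
    have hsub : HasFDerivAt (fun w ↦ w - x) (.id ℝ E) w := (hasFDerivAt_id w).sub_const x
    have hB := ((B.hasFDerivAt.comp w hsub).clm_apply hsub).const_smul (2⁻¹ : ℝ)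
    refine (((hJ w (hseg hw)).differentiableAt (by norm_num)).hasFDerivAt.sub hB).congr_fderiv ?_
    ext v
    simp [hsymm v w, hsymm v x, ← add_smul, show (2⁻¹ + 2⁻¹ : ℝ) = 1 by norm_num]
  have := (convex_segment x y).norm_image_sub_le_of_norm_hasFDerivWithin_le'
    (φ := fderiv ℝ J x) (C := L * ‖y - x‖ ^ 2)
    (fun w hw ↦ (hderiv w hw).hasFDerivWithinAt) (fun w hw ↦ ?_)
    (left_mem_segment ℝ x y) (right_mem_segment ℝ x y)
  · simpa [sub_right_comm, pow_succ, mul_assoc] using this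
  · calc ‖fderiv ℝ J w - B (w - x) - fderiv ℝ J x‖
        = ‖fderiv ℝ J w - fderiv ℝ J x - B (w - x)‖ := by rw [sub_right_comm]
      _ ≤ L * ‖w - x‖ ^ 2 := norm_sub_sub_fderiv_le_of_lipschitzOnWith hs
          (fun z hz ↦ ((hJ₁ z hz).differentiableAt two_ne_zero).hasFDerivAt) hL hx (hseg hw)
      _ ≤ L * ‖y - x‖ ^ 2 := by gcongr; exact norm_sub_le_of_mem_segment hw

lemma apply_apply_sub_apply_apply_le (B : E →L[ℝ] E →L[ℝ] ℝ) (v w : E) :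
    B v v - B w w ≤ ‖B‖ * ‖v - w‖ * (‖v‖ + ‖w‖) := by
  calc B v v - B w w = B (v - w) v + B w (v - w) := by simp
    _ ≤ ‖B‖ * ‖v - w‖ * ‖v‖ + ‖B‖ * ‖w‖ * ‖v - w‖ :=
        add_le_add ((le_abs_self _).trans (B.le_opNorm₂ _ _))
          ((le_abs_self _).trans (B.le_opNorm₂ _ _))
    _ = _ := by ring

lemma exists_le_taylor_add {J : E → ℝ} (hs : Convex ℝ s) (hs' : IsCompact s)
    (hJ : ∀ w ∈ s, ContDiffAt ℝ 3 J w) (R : ℝ) (hR : 0 ≤ R) :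
    ∃ C, ∀ m ∈ s, ∀ x ∈ s, ∀ (w : E) (c N : ℝ), 0 ≤ c → 1 ≤ N →
      ‖c • w‖ ≤ R * c * N ^ 2 → ‖x - m‖ ≤ R * c * N ^ 2 → ‖x - m - c • w‖ ≤ R * c ^ 2 * N ^ 2 →
      J x ≤ J m + fderiv ℝ J m (x - m) + 2⁻¹ * c ^ 2 * fderiv ℝ (fderiv ℝ J) m w w +
        C * c ^ 3 * N ^ 6 := by
  obtain ⟨L, hL⟩ := exists_norm_taylor_two_le hs hs' hJ
  obtain ⟨β, hβ⟩ := hs'.exists_bound_of_continuousOn (f := fderiv ℝ (fderiv ℝ J)) fun w hw ↦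
    (((hJ w hw).fderiv_right (m := 2) (by norm_num)).fderiv_right (m := 1)
      (by norm_num)).continuousAt.continuousWithinAt
  refine ⟨L * R ^ 3 + |β| * R ^ 2, fun m hm x hx w c N hc hN hw hxm hxw ↦ ?_⟩
  set B := fderiv ℝ (fderiv ℝ J) m
  have hN₄ : N ^ 4 ≤ N ^ 6 := pow_le_pow_right₀ hN (by norm_num)
  have htaylor : J x - J m - fderiv ℝ J m (x - m) - 2⁻¹ * B (x - m) (x - m) ≤
      L * R ^ 3 * c ^ 3 * N ^ 6 := by
    calc _ ≤ L * ‖x - m‖ ^ 3 := (le_abs_self _).trans (hL m hm x hx)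
      _ ≤ L * (R * c * N ^ 2) ^ 3 := by gcongr
      _ = _ := by ring
  have hquad : B (x - m) (x - m) - c ^ 2 * B w w ≤ 2 * (|β| * R ^ 2 * c ^ 3 * N ^ 6) := by
    calc B (x - m) (x - m) - c ^ 2 * B w w
        = B (x - m) (x - m) - B (c • w) (c • w) := by simp; ring
      _ ≤ ‖B‖ * ‖x - m - c • w‖ * (‖x - m‖ + ‖c • w‖) := apply_apply_sub_apply_apply_le _ _ _
      _ ≤ |β| * (R * c ^ 2 * N ^ 2) * (R * c * N ^ 2 + R * c * N ^ 2) := by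
          gcongr; exact (hβ m hm).trans (le_abs_self β)
      _ = 2 * (|β| * R ^ 2 * c ^ 3 * N ^ 4) := by ring
      _ ≤ _ := by gcongr
  linarith

end Taylor

section C11

open Bornology

variable {V W : Type*} [NormedAddCommGroup V] [NormedSpace ℝ V] [NormedAddCommGroup W]
  [NormedSpace ℝ W]

/-- `F` is a map of class `C^{1,1}` with values in `K`, differentials in `𝒟` and second-order
remainders at most `M ‖h‖ ^ 2`. For convex `K` and `𝒟` this class is stable under averaging. -/
structure IsC11With (K : Set W) (𝒟 : Set (V →L[ℝ] W)) (M : ℝ) (F : V → W) : Prop where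
  continuous : Continuous F
  mem (z : V) : F z ∈ K
  exists_deriv : ∃ D : V → V →L[ℝ] W, Continuous D ∧ (∀ z, D z ∈ 𝒟) ∧
    ∀ z h, ‖F (z + h) - F z - D z h‖ ≤ M * ‖h‖ ^ 2

variable {K : Set W} {𝒟 : Set (V →L[ℝ] W)} {M : ℝ} {F : V → W} {J : W → ℝ}

lemma IsC11With.isBounded_range (hK : IsCompact K) (hF : IsC11With K 𝒟 M F) :
    IsBounded (Set.range F) := hK.isBounded.subset (Set.range_subset_iff.2 hF.mem)

lemma IsC11With.continuous_comp (hJ : ContinuousOn J K) (hF : IsC11With K 𝒟 M F) :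
    Continuous (J ∘ F) :=
  hJ.comp_continuous hF.continuous hF.mem

lemma IsC11With.isBounded_range_comp (hK : IsCompact K) (hJ : ContinuousOn J K)
    (hF : IsC11With K 𝒟 M F) : IsBounded (Set.range (J ∘ F)) :=
  (hK.image_of_continuousOn hJ).isBounded.subset
    (Set.range_subset_iff.2 fun z ↦ Set.mem_image_of_mem J (hF.mem z))

end C11

section Noise

open Bornology

lemma integral_le_add_mul_integral {Ω : Type*} [MeasurableSpace Ω] {μ : Measure Ω}
    [IsProbabilityMeasure μ] {f ℓ q N : Ω → ℝ} {a k : ℝ}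
    (hf : Integrable f μ) (hℓ : Integrable ℓ μ) (hq : Integrable q μ) (hN : Integrable N μ)
    (hℓ₀ : ∫ h, ℓ h ∂μ = 0) (hq₀ : ∫ h, q h ∂μ ≤ 0)
    (hle : ∀ h, f h ≤ a + ℓ h + q h + k * N h) : ∫ h, f h ∂μ ≤ a + k * ∫ h, N h ∂μ := by
  have haℓ : Integrable (fun h ↦ a + ℓ h) μ := (integrable_const a).add hℓ
  have haℓq : Integrable (fun h ↦ a + ℓ h + q h) μ := haℓ.add hq
  calc ∫ h, f h ∂μ ≤ ∫ h, (a + ℓ h + q h + k * N h) ∂μ :=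
        integral_mono hf (haℓq.add (hN.const_mul k)) hle
    _ = a + ∫ h, q h ∂μ + k * ∫ h, N h ∂μ := by
        rw [integral_add haℓq (hN.const_mul k), integral_add haℓ hq,
          integral_add (integrable_const a) hℓ, hℓ₀, integral_const_mul]
        simp
    _ ≤ a + k * ∫ h, N h ∂μ := by linarith

variable {V W : Type*} [NormedAddCommGroup V] [MeasurableSpace V] {Γ : Measure V}

lemma integrable_one_add_norm_pow [IsFiniteMeasure Γ] {n : ℕ} (hΓ : MemLp id n Γ) :
    Integrable (fun h : V ↦ (1 + ‖h‖) ^ n) Γ := by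
  have hnorm : MemLp (fun h : V ↦ ‖h‖) n Γ := hΓ.norm
  refine (((memLp_const (1 : ℝ)).add hnorm).integrable_norm_pow' (p := n)).congr
    (.of_forall fun h ↦ ?_)
  simp only [Pi.add_apply]
  rw [norm_of_nonneg (by positivity)]

lemma integrable_comp_add_smul [NormedSpace ℝ V] [BorelSpace V] [SecondCountableTopology V]
    [NormedAddCommGroup W] [IsFiniteMeasure Γ] {F : V → W} (hF : Continuous F)
    (hF' : IsBounded (Set.range F)) (c : ℝ) (z : V) : Integrable (fun h ↦ F (z + c • h)) Γ := by
  obtain ⟨C, hC⟩ := hF'.exists_norm_le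
  exact .of_bound (by fun_prop : Continuous fun h ↦ F (z + c • h)).aestronglyMeasurable C
    (.of_forall fun h ↦ hC _ ⟨_, rfl⟩)

variable [NormedSpace ℝ V] [NormedAddCommGroup W] [NormedSpace ℝ W]

/-- The noise operator `noiseOp Γ c F z = 𝔼 F (z + c Z)`, where the random vector `Z` has law
`Γ`. -/
noncomputable def noiseOp (Γ : Measure V) (c : ℝ) (F : V → W) (z : V) : W :=
  ∫ h, F (z + c • h) ∂Γ

/-- The quadratic form `D²J(w)` has nonpositive mean along the linear random vectors `D Z`, for
`w ∈ K`, `D ∈ 𝒟` and `Z` of law `Γ`: the infinitesimal form of Jensen's inequality. -/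
def IsConcaveAlong (Γ : Measure V) (K : Set W) (𝒟 : Set (V →L[ℝ] W)) (J : W → ℝ) : Prop :=
  ∀ w ∈ K, ∀ D ∈ 𝒟, ∫ h, fderiv ℝ (fderiv ℝ J) w (D h) (D h) ∂Γ ≤ 0

variable [BorelSpace V]

lemma integrable_apply_apply (B : W →L[ℝ] W →L[ℝ] ℝ) (D : V →L[ℝ] W) (hΓ : MemLp id 2 Γ) :
    Integrable (fun h ↦ B (D h) (D h)) Γ := by
  refine ((hΓ.integrable_norm_pow two_ne_zero).const_mul (‖B‖ * ‖D‖ ^ 2)).mono'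
    (by fun_prop : Continuous fun h ↦ B (D h) (D h)).aestronglyMeasurable (.of_forall fun h ↦ ?_)
  calc ‖B (D h) (D h)‖ ≤ ‖B‖ * ‖D h‖ * ‖D h‖ := B.le_opNorm₂ _ _
    _ ≤ ‖B‖ * (‖D‖ * ‖h‖) * (‖D‖ * ‖h‖) := by gcongr <;> exact D.le_opNorm h
    _ = _ := by simp; ring

variable [SecondCountableTopology V]

lemma continuous_noiseOp [IsFiniteMeasure Γ] {F : V → W} (hF : Continuous F)
    (hF' : IsBounded (Set.range F)) (c : ℝ) : Continuous (noiseOp Γ c F) := by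
  obtain ⟨C, hC⟩ := hF'.exists_norm_le
  exact continuous_of_dominated
    (fun z ↦ (integrable_comp_add_smul hF hF' c z).aestronglyMeasurable)
    (fun z ↦ .of_forall fun h ↦ hC _ ⟨_, rfl⟩) (integrable_const C) (.of_forall fun h ↦ by fun_prop)

variable {K : Set W} {𝒟 : Set (V →L[ℝ] W)} {M : ℝ} {F : V → W}

variable [CompleteSpace W] [IsProbabilityMeasure Γ]

lemma isC11With_noiseOp (hK : IsCompact K) (hKc : Convex ℝ K) (h𝒟 : IsCompact 𝒟)
    (h𝒟c : Convex ℝ 𝒟) (hF : IsC11With K 𝒟 M F) (c : ℝ) :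
    IsC11With K 𝒟 M (noiseOp Γ c F) := by
  have hFb := hF.isBounded_range hK
  have hFi := integrable_comp_add_smul (Γ := Γ) hF.continuous hFb c
  obtain ⟨D, hD, hD𝒟, hDF⟩ := hF.exists_deriv
  have hDb : IsBounded (Set.range D) := h𝒟.isBounded.subset (Set.range_subset_iff.2 hD𝒟)
  have hDi := integrable_comp_add_smul (Γ := Γ) hD hDb c
  refine ⟨continuous_noiseOp hF.continuous hFb c,
    fun z ↦ hKc.integral_mem hK.isClosed (.of_forall fun h ↦ hF.mem _) (hFi z),
    noiseOp Γ c D, continuous_noiseOp hD hDb c,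
    fun z ↦ h𝒟c.integral_mem h𝒟.isClosed (.of_forall fun h ↦ hD𝒟 _) (hDi z), fun z k ↦ ?_⟩
  have hrem : ∫ h, (F (z + k + c • h) - F (z + c • h) - D (z + c • h) k) ∂Γ =
      noiseOp Γ c F (z + k) - noiseOp Γ c F z - noiseOp Γ c D z k := by
    have hΔ : Integrable (fun h ↦ F (z + k + c • h) - F (z + c • h)) Γ := (hFi _).sub (hFi _)
    rw [integral_sub hΔ ((hDi z).apply_continuousLinearMap k),
      integral_sub (hFi _) (hFi _), ← ContinuousLinearMap.integral_apply (hDi z)]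
    rfl
  rw [← hrem]
  refine (norm_integral_le_of_norm_le_const (.of_forall fun h ↦ ?_)).trans_eq
    (by rw [probReal_univ, mul_one])
  simpa only [add_right_comm z k] using hDF (z + c • h) k

lemma integral_apply_sub_noiseOp (L : W →L[ℝ] ℝ) (hF : Continuous F)
    (hF' : IsBounded (Set.range F)) (c : ℝ) (z : V) :
    ∫ h, L (F (z + c • h) - noiseOp Γ c F z) ∂Γ = 0 := by
  have hFi := integrable_comp_add_smul (Γ := Γ) hF hF' c z
  have hΔ : Integrable (fun h ↦ F (z + c • h) - noiseOp Γ c F z) Γ :=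
    hFi.sub (integrable_const _)
  rw [L.integral_comp_comm hΔ, integral_sub hFi (integrable_const _)]
  simp [noiseOp]

variable [CompleteSpace V]

lemma norm_noiseOp_sub_le {C : ℝ} (hF : Continuous F) (hF' : IsBounded (Set.range F))
    (hΓ : MemLp id 2 Γ) (hΓ₀ : ∫ h, h ∂Γ = 0) {c : ℝ} {z : V} (D : V →L[ℝ] W)
    (hD : ∀ h, ‖F (z + c • h) - F z - D h‖ ≤ C * ‖h‖ ^ 2) :
    ‖noiseOp Γ c F z - F z‖ ≤ C * ∫ h, ‖h‖ ^ 2 ∂Γ := by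
  have hFi := integrable_comp_add_smul (Γ := Γ) hF hF' c z
  have hΔ : Integrable (fun h ↦ F (z + c • h) - F z) Γ := hFi.sub (integrable_const _)
  have hΓ₁ : Integrable (fun h : V ↦ h) Γ := hΓ.integrable (by norm_num)
  have hrem : ∫ h, (F (z + c • h) - F z - D h) ∂Γ = noiseOp Γ c F z - F z := by
    rw [integral_sub hΔ (D.integrable_comp hΓ₁), integral_sub hFi (integrable_const _),
      D.integral_comp_comm hΓ₁, hΓ₀]
    simp [noiseOp]
  rw [← hrem, ← integral_const_mul]
  exact norm_integral_le_of_norm_le ((hΓ.integrable_norm_pow two_ne_zero).const_mul _)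
    (.of_forall hD)

lemma exists_norm_sub_noiseOp_le (hK : IsCompact K) (h𝒟 : IsCompact 𝒟)
    (hΓ : MemLp id 2 Γ) (hΓ₀ : ∫ h, h ∂Γ = 0) (M : ℝ) :
    ∃ R ≥ 0, ∀ F, IsC11With K 𝒟 M F → ∀ z c, 0 ≤ c → c ≤ 1 → ∃ D ∈ 𝒟, ∀ h,
      ‖c • D h‖ ≤ R * c * (1 + ‖h‖) ^ 2 ∧
      ‖F (z + c • h) - noiseOp Γ c F z‖ ≤ R * c * (1 + ‖h‖) ^ 2 ∧
      ‖F (z + c • h) - noiseOp Γ c F z - c • D h‖ ≤ R * c ^ 2 * (1 + ‖h‖) ^ 2 := by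
  obtain ⟨R₀, hR₀, h𝒟R₀⟩ := h𝒟.isBounded.exists_pos_norm_le
  set A := ∫ h, ‖h‖ ^ 2 ∂Γ
  have hA : 0 ≤ A := by positivity
  refine ⟨R₀ + |M| * (1 + A), by positivity, fun F hF z c hc hc' ↦ ?_⟩
  obtain ⟨D, -, hD𝒟, hDF⟩ := hF.exists_deriv
  have hrem (h : V) : ‖F (z + c • h) - F z - c • D z h‖ ≤ |M| * c ^ 2 * ‖h‖ ^ 2 := by
    calc _ ≤ M * (c * ‖h‖) ^ 2 := by simpa [norm_smul, abs_of_nonneg hc] using hDF z (c • h)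
      _ ≤ |M| * (c * ‖h‖) ^ 2 := by gcongr; exact le_abs_self M
      _ = _ := by ring
  have hmean : ‖noiseOp Γ c F z - F z‖ ≤ |M| * c ^ 2 * A :=
    norm_noiseOp_sub_le hF.continuous (hF.isBounded_range hK) hΓ hΓ₀ (c • D z) hrem
  refine ⟨D z, hD𝒟 z, fun h ↦ ?_⟩
  have hlin : ‖c • D z h‖ ≤ R₀ * c * (1 + ‖h‖) ^ 2 := by
    calc ‖c • D z h‖ = c * ‖D z h‖ := by rw [norm_smul, norm_of_nonneg hc]
      _ ≤ c * (R₀ * ‖h‖) := by gcongr; exact (D z).le_of_opNorm_le (h𝒟R₀ _ (hD𝒟 z)) h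
      _ ≤ c * (R₀ * (1 + ‖h‖) ^ 2) := by gcongr; nlinarith [norm_nonneg h]
      _ = _ := by ring
  have herr : ‖F (z + c • h) - noiseOp Γ c F z - c • D z h‖ ≤
      |M| * (1 + A) * c ^ 2 * (1 + ‖h‖) ^ 2 := by
    calc _ = ‖(F (z + c • h) - F z - c • D z h) - (noiseOp Γ c F z - F z)‖ := by
          congr 1; abel
      _ ≤ |M| * c ^ 2 * ‖h‖ ^ 2 + |M| * c ^ 2 * A := norm_sub_le_of_le (hrem h) hmean
      _ = |M| * c ^ 2 * (‖h‖ ^ 2 + A * 1) := by ring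
      _ ≤ |M| * c ^ 2 * ((1 + ‖h‖) ^ 2 + A * (1 + ‖h‖) ^ 2) := by
          gcongr <;> nlinarith [norm_nonneg h]
      _ = _ := by ring
  have hcc : c ^ 2 ≤ c := by nlinarith
  refine ⟨hlin.trans ?_, ?_, herr.trans ?_⟩
  · gcongr; nlinarith [abs_nonneg M]
  · calc _ = ‖c • D z h + (F (z + c • h) - noiseOp Γ c F z - c • D z h)‖ := by
          rw [add_sub_cancel]
      _ ≤ R₀ * c * (1 + ‖h‖) ^ 2 + |M| * (1 + A) * c * (1 + ‖h‖) ^ 2 :=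
          norm_add_le_of_le hlin (herr.trans (by gcongr))
      _ = _ := by ring
  · gcongr; linarith

lemma exists_noiseOp_comp_le (hK : IsCompact K) (hKc : Convex ℝ K) (h𝒟 : IsCompact 𝒟)
    (hJ : ∀ w ∈ K, ContDiffAt ℝ 3 J w) (hΓ : MemLp id 6 Γ) (hΓ₀ : ∫ h, h ∂Γ = 0)
    (hconc : IsConcaveAlong Γ K 𝒟 J) (M : ℝ) :
    ∃ C, ∀ F, IsC11With K 𝒟 M F → ∀ z c, 0 ≤ c → c ≤ 1 →
      noiseOp Γ c (J ∘ F) z ≤ J (noiseOp Γ c F z) + C * c ^ 3 := by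
  have hΓ₂ : MemLp id 2 Γ := hΓ.mono_exponent (by norm_num)
  obtain ⟨R, hR, hfluct⟩ := exists_norm_sub_noiseOp_le hK h𝒟 hΓ₂ hΓ₀ M
  obtain ⟨C, hCJ⟩ := exists_le_taylor_add hKc hK hJ R hR
  have hN : Integrable (fun h : V ↦ (1 + ‖h‖) ^ 6) Γ := integrable_one_add_norm_pow hΓ
  refine ⟨C * ∫ h, (1 + ‖h‖) ^ 6 ∂Γ, fun F hF z c hc hc' ↦ ?_⟩
  obtain ⟨D, hD, hDF⟩ := hfluct F hF z c hc hc'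
  have hJc : ContinuousOn J K := fun w hw ↦ (hJ w hw).continuousAt.continuousWithinAt
  have hFb := hF.isBounded_range hK
  have hFi := integrable_comp_add_smul (Γ := Γ) hF.continuous hFb c z
  have hJFi := integrable_comp_add_smul (Γ := Γ) (hF.continuous_comp hJc)
    (hF.isBounded_range_comp hK hJc) c z
  obtain ⟨m, hm⟩ : ∃ m, noiseOp Γ c F z = m := ⟨_, rfl⟩
  have hmK : m ∈ K := hm ▸ hKc.integral_mem hK.isClosed (.of_forall fun h ↦ hF.mem _) hFi
  have hlin_int : Integrable (fun h ↦ fderiv ℝ J m (F (z + c • h) - m)) Γ :=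
    (fderiv ℝ J m).integrable_comp (hFi.sub (integrable_const m))
  refine (integral_le_add_mul_integral hJFi hlin_int
    ((integrable_apply_apply (fderiv ℝ (fderiv ℝ J) m) D hΓ₂).const_mul (2⁻¹ * c ^ 2)) hN
    (hm ▸ integral_apply_sub_noiseOp _ hF.continuous hFb c z) ?_ fun h ↦
      hCJ m hmK _ (hF.mem _) (D h) c _ hc (by simp) (hDF h).1 (hm ▸ (hDF h).2.1)
        (hm ▸ (hDF h).2.2)).trans_eq (by rw [hm]; ring)
  rw [integral_const_mul]
  exact mul_nonpos_of_nonneg_of_nonpos (by positivity) (hconc m hmK D hD)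

end Noise

section GaussianJensen

open Bornology

variable {V W : Type*} [NormedAddCommGroup V] [NormedSpace ℝ V] [MeasurableSpace V] [BorelSpace V]
  [SecondCountableTopology V] [CompleteSpace V] [NormedAddCommGroup W] [NormedSpace ℝ W]
  {Γ : Measure V} [IsGaussian Γ]

lemma map_prod_smul_add_smul (hΓ₀ : ∫ h, h ∂Γ = 0) {a b : ℝ} (hab : a ^ 2 + b ^ 2 = 1) :
    (Γ.prod Γ).map (fun p ↦ a • p.1 + b • p.2) = Γ := by
  obtain ⟨θ, rfl, rfl⟩ : ∃ θ : ℝ, cos θ = a ∧ sin θ = b := by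
    have hnorm : ‖(⟨a, b⟩ : ℂ)‖ = 1 := by
      rw [Complex.norm_def, Complex.normSq_mk, ← pow_two, ← pow_two, hab, sqrt_one]
    exact ⟨Complex.arg ⟨a, b⟩, by simpa [hnorm] using Complex.norm_mul_cos_arg ⟨a, b⟩,
      by simpa [hnorm] using Complex.norm_mul_sin_arg ⟨a, b⟩⟩
  have hrot := IsGaussian.map_rotation_eq_self (μ := Γ) hΓ₀ θ
  calc (Γ.prod Γ).map (fun p ↦ cos θ • p.1 + sin θ • p.2)
      = ((Γ.prod Γ).map (ContinuousLinearMap.rotation θ)).map Prod.fst := by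
        rw [Measure.map_map measurable_fst (by fun_prop)]
        rfl
    _ = Γ := by rw [hrot, Measure.map_fst_prod]; simp

lemma noiseOp_noiseOp (hΓ₀ : ∫ h, h ∂Γ = 0) {F : V → W} (hF : Continuous F)
    (hF' : IsBounded (Set.range F)) (c : ℝ) :
    noiseOp Γ c (noiseOp Γ c F) = noiseOp Γ (√2 * c) F := by
  obtain ⟨C, hC⟩ := hF'.exists_norm_le
  ext z
  have hsum (p : V × V) : z + (√2 * c) • ((√2)⁻¹ • p.1 + (√2)⁻¹ • p.2) =
      z + c • p.1 + c • p.2 := by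
    rw [← smul_add, smul_smul, mul_right_comm, mul_inv_cancel₀ (by positivity), one_mul, smul_add,
      add_assoc]
  have hint : Integrable (fun p : V × V ↦ F (z + c • p.1 + c • p.2)) (Γ.prod Γ) :=
    .of_bound (by fun_prop : Continuous fun p : V × V ↦
      F (z + c • p.1 + c • p.2)).aestronglyMeasurable C (.of_forall fun p ↦ hC _ ⟨_, rfl⟩)
  calc noiseOp Γ c (noiseOp Γ c F) z = ∫ p, F (z + c • p.1 + c • p.2) ∂Γ.prod Γ :=
        (integral_prod _ hint).symm
    _ = ∫ p, F (z + (√2 * c) • ((√2)⁻¹ • p.1 + (√2)⁻¹ • p.2)) ∂Γ.prod Γ := by simp only [hsum]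
    _ = noiseOp Γ (√2 * c) F z := by
        rw [noiseOp]
        conv_rhs => rw [← map_prod_smul_add_smul hΓ₀ (a := (√2)⁻¹) (b := (√2)⁻¹) (by norm_num)]
        exact (integral_map (by fun_prop) (by fun_prop : Continuous fun h ↦
          F (z + (√2 * c) • h)).aestronglyMeasurable).symm

variable [CompleteSpace W] {K : Set W} {𝒟 : Set (V →L[ℝ] W)} {J : W → ℝ} {M : ℝ}

lemma noiseOp_sqrt_two_mul_comp_le (hΓ₀ : ∫ h, h ∂Γ = 0) (hK : IsCompact K) (hKc : Convex ℝ K)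
    (h𝒟 : IsCompact 𝒟) (h𝒟c : Convex ℝ 𝒟) (hJ : ContinuousOn J K) {c δ : ℝ}
    (h : ∀ F, IsC11With K 𝒟 M F → ∀ z, noiseOp Γ c (J ∘ F) z ≤ J (noiseOp Γ c F z) + δ)
    {F : V → W} (hF : IsC11With K 𝒟 M F) (z : V) :
    noiseOp Γ (√2 * c) (J ∘ F) z ≤ J (noiseOp Γ (√2 * c) F z) + 2 * δ := by
  have hJF := hF.continuous_comp hJ
  have hJF' := hF.isBounded_range_comp hK hJ
  have hSF : IsC11With K 𝒟 M (noiseOp Γ c F) := isC11With_noiseOp hK hKc h𝒟 h𝒟c hF c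
  have hJSF := integrable_comp_add_smul (Γ := Γ) (hSF.continuous_comp hJ)
    (hSF.isBounded_range_comp hK hJ) c z
  have hSJF : Integrable (fun h ↦ noiseOp Γ c (J ∘ F) (z + c • h)) Γ := by
    obtain ⟨C, hC⟩ := hJF'.exists_norm_le
    exact .of_bound ((continuous_noiseOp hJF hJF' c).comp (by fun_prop)).aestronglyMeasurable C
      (.of_forall fun h ↦ (norm_integral_le_of_norm_le_const
        (.of_forall fun k ↦ hC _ ⟨_, rfl⟩)).trans_eq (by simp))
  rw [← noiseOp_noiseOp hΓ₀ hJF hJF', ← noiseOp_noiseOp hΓ₀ hF.continuous (hF.isBounded_range hK)]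
  calc noiseOp Γ c (noiseOp Γ c (J ∘ F)) z
      ≤ ∫ k, ((J ∘ noiseOp Γ c F) (z + c • k) + δ) ∂Γ :=
        integral_mono hSJF (hJSF.add (integrable_const δ)) fun k ↦ h F hF _
    _ = noiseOp Γ c (J ∘ noiseOp Γ c F) z + δ := by
        rw [integral_add hJSF (integrable_const δ)]
        simp [noiseOp]
    _ ≤ J (noiseOp Γ c (noiseOp Γ c F) z) + 2 * δ := by linarith [h _ hSF z]

theorem integral_comp_le_of_isConcaveAlong (hΓ₀ : ∫ h, h ∂Γ = 0) (hK : IsCompact K)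
    (hKc : Convex ℝ K) (h𝒟 : IsCompact 𝒟) (h𝒟c : Convex ℝ 𝒟) (hJ : ∀ w ∈ K, ContDiffAt ℝ 3 J w)
    (hconc : IsConcaveAlong Γ K 𝒟 J) {F : V → W} (hF : IsC11With K 𝒟 M F) :
    ∫ h, J (F h) ∂Γ ≤ J (∫ h, F h ∂Γ) := by
  have hJc : ContinuousOn J K := fun w hw ↦ (hJ w hw).continuousAt.continuousWithinAt
  obtain ⟨C, hC⟩ := exists_noiseOp_comp_le hK hKc h𝒟 hJ
    (IsGaussian.memLp_id Γ 6 (by norm_num)) hΓ₀ hconc M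
  have hiter {c : ℝ} (hc : 0 ≤ c) (hc' : c ≤ 1) (k : ℕ) : ∀ F, IsC11With K 𝒟 M F → ∀ z,
      noiseOp Γ (√2 ^ k * c) (J ∘ F) z ≤ J (noiseOp Γ (√2 ^ k * c) F z) + 2 ^ k * (C * c ^ 3) := by
    induction k with
    | zero => simpa using fun F hF z ↦ hC F hF z c hc hc'
    | succ k ih =>
      simpa only [pow_succ', mul_assoc] using
        fun F ↦ noiseOp_sqrt_two_mul_comp_le hΓ₀ hK hKc h𝒟 h𝒟c hJc ih
  have hk (k : ℕ) : ∫ h, J (F h) ∂Γ ≤ J (∫ h, F h ∂Γ) + C * (√2)⁻¹ ^ k := by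
    have hone : √2 ^ k * (√2)⁻¹ ^ k = 1 := by
      rw [← mul_pow, mul_inv_cancel₀ (by positivity), one_pow]
    have htwo : (2 : ℝ) ^ k * (C * ((√2)⁻¹ ^ k) ^ 3) = C * (√2)⁻¹ ^ k := by
      have : (2 : ℝ) ^ k = (√2 ^ k) ^ 2 := by rw [← pow_mul, mul_comm, pow_mul, sq_sqrt]; norm_num
      rw [this]
      linear_combination C * (√2)⁻¹ ^ k * (√2 ^ k * (√2)⁻¹ ^ k + 1) * hone
    have := hiter (c := (√2)⁻¹ ^ k) (by positivity)
      (pow_le_one₀ (by positivity) (inv_le_one_of_one_le₀ (one_le_sqrt.2 one_le_two))) k F hF 0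
    rw [hone, htwo] at this
    simpa only [noiseOp, one_smul, zero_add, Function.comp_apply] using this
  have hlim : Tendsto (fun k : ℕ ↦ J (∫ h, F h ∂Γ) + C * (√2)⁻¹ ^ k) atTop
      (𝓝 (J (∫ h, F h ∂Γ) + C * 0)) :=
    ((tendsto_pow_atTop_nhds_zero_of_lt_one (by positivity)
      (inv_lt_one_of_one_lt₀ one_lt_sqrt_two)).const_mul C).const_add _
  simpa using ge_of_tendsto' hlim hk

end GaussianJensen

section RpowMulRpow

variable {α β : ℝ} {w : ℝ × ℝ}

lemma contDiffAt_rpow_mul_rpow {n : WithTop ℕ∞} (hw₁ : 0 < w.1) (hw₂ : 0 < w.2) :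
    ContDiffAt ℝ n (fun w : ℝ × ℝ ↦ w.1 ^ α * w.2 ^ β) w :=
  (contDiffAt_fst.rpow_const_of_ne hw₁.ne').mul (contDiffAt_snd.rpow_const_of_ne hw₂.ne')

lemma hasFDerivAt_rpow_mul_rpow (α β : ℝ) (hw₁ : 0 < w.1) (hw₂ : 0 < w.2) :
    HasFDerivAt (fun w : ℝ × ℝ ↦ w.1 ^ α * w.2 ^ β)
      ((α * (w.1 ^ (α - 1) * w.2 ^ β)) • ContinuousLinearMap.fst ℝ ℝ ℝ +
        (β * (w.1 ^ α * w.2 ^ (β - 1))) • ContinuousLinearMap.snd ℝ ℝ ℝ) w := by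
  refine ((hasFDerivAt_fst.rpow_const (p := α) (.inl hw₁.ne')).mul
    (hasFDerivAt_snd.rpow_const (p := β) (.inl hw₂.ne'))).congr_fderiv ?_
  ext <;> simp <;> ring

lemma fderiv_fderiv_rpow_mul_rpow (hw₁ : 0 < w.1) (hw₂ : 0 < w.2) (v : ℝ × ℝ) :
    fderiv ℝ (fderiv ℝ fun w : ℝ × ℝ ↦ w.1 ^ α * w.2 ^ β) w v v =
      w.1 ^ α * w.2 ^ β * (2 * (α * β * (v.1 / w.1 * (v.2 / w.2))) -
        α * (1 - α) * (v.1 / w.1) ^ 2 - β * (1 - β) * (v.2 / w.2) ^ 2) := by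
  have hnhds : ∀ᶠ z : ℝ × ℝ in 𝓝 w, 0 < z.1 ∧ 0 < z.2 :=
    (continuousAt_fst.eventually (lt_mem_nhds hw₁)).and
      (continuousAt_snd.eventually (lt_mem_nhds hw₂))
  have hfderiv : fderiv ℝ (fun w : ℝ × ℝ ↦ w.1 ^ α * w.2 ^ β) =ᶠ[𝓝 w] fun w ↦
      (α * (w.1 ^ (α - 1) * w.2 ^ β)) • ContinuousLinearMap.fst ℝ ℝ ℝ +
        (β * (w.1 ^ α * w.2 ^ (β - 1))) • ContinuousLinearMap.snd ℝ ℝ ℝ :=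
    hnhds.mono fun z hz ↦ (hasFDerivAt_rpow_mul_rpow α β hz.1 hz.2).fderiv
  have h₁ := ((hasFDerivAt_rpow_mul_rpow (α - 1) β hw₁ hw₂).const_mul α).smul_const
    (ContinuousLinearMap.fst ℝ ℝ ℝ)
  have h₂ := ((hasFDerivAt_rpow_mul_rpow α (β - 1) hw₁ hw₂).const_mul β).smul_const
    (ContinuousLinearMap.snd ℝ ℝ ℝ)
  rw [hfderiv.fderiv_eq, (h₁.fun_add h₂).fderiv]
  simp only [rpow_sub_one hw₁.ne', rpow_sub_one hw₂.ne', add_apply,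
    ContinuousLinearMap.smulRight_apply, smul_apply, ContinuousLinearMap.coe_fst',
    ContinuousLinearMap.coe_snd', smul_eq_mul]
  field_simp
  ring

variable {V : Type*} [NormedAddCommGroup V] [NormedSpace ℝ V] [MeasurableSpace V]
  {Γ : Measure V} {K : Set (ℝ × ℝ)} {𝒟 : Set (V →L[ℝ] ℝ × ℝ)} {ρ : ℝ}

lemma two_mul_mul_le_of_sq_le {S T x : ℝ} (hα : 0 ≤ α) (hα' : α ≤ 1) (hβ : 0 ≤ β) (hβ' : β ≤ 1)
    (hρ : α * β * ρ ^ 2 ≤ (1 - α) * (1 - β)) (hS : 0 ≤ S) (hT : 0 ≤ T)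
    (hx : x ^ 2 ≤ ρ ^ 2 * (S * T)) :
    2 * (α * β * x) ≤ α * (1 - α) * S + β * (1 - β) * T := by
  have hA : 0 ≤ α * (1 - α) * S := mul_nonneg (mul_nonneg hα (sub_nonneg.2 hα')) hS
  have hB : 0 ≤ β * (1 - β) * T := mul_nonneg (mul_nonneg hβ (sub_nonneg.2 hβ')) hT
  have hsq : (α * β * x) ^ 2 ≤ (α * (1 - α) * S) * (β * (1 - β) * T) := by
    calc (α * β * x) ^ 2 = (α * β) ^ 2 * x ^ 2 := by ring
      _ ≤ (α * β) ^ 2 * (ρ ^ 2 * (S * T)) := by gcongr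
      _ = α * β * (S * T) * (α * β * ρ ^ 2) := by ring
      _ ≤ α * β * (S * T) * ((1 - α) * (1 - β)) := by gcongr
      _ = _ := by ring
  refine le_of_abs_le (abs_le_of_sq_le_sq ?_ (add_nonneg hA hB))
  linarith [sq_nonneg (α * (1 - α) * S - β * (1 - β) * T)]

lemma isConcaveAlong_rpow_mul_rpow (hα : 0 ≤ α) (hα' : α ≤ 1) (hβ : 0 ≤ β) (hβ' : β ≤ 1)
    (hρ : α * β * ρ ^ 2 ≤ (1 - α) * (1 - β)) (hΓ : MemLp id 2 Γ)
    (hK : ∀ w ∈ K, 0 < w.1 ∧ 0 < w.2)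
    (hcorr : ∀ D ∈ 𝒟, (∫ h, (D h).1 * (D h).2 ∂Γ) ^ 2 ≤
      ρ ^ 2 * ((∫ h, (D h).1 ^ 2 ∂Γ) * ∫ h, (D h).2 ^ 2 ∂Γ)) :
    IsConcaveAlong Γ K 𝒟 fun w ↦ w.1 ^ α * w.2 ^ β := by
  intro w hw D hD
  obtain ⟨hw₁, hw₂⟩ := hK w hw
  have hD₁ : MemLp (fun h ↦ (D h).1) 2 Γ := (ContinuousLinearMap.fst ℝ ℝ ℝ ∘L D).comp_memLp' hΓ
  have hD₂ : MemLp (fun h ↦ (D h).2) 2 Γ := (ContinuousLinearMap.snd ℝ ℝ ℝ ∘L D).comp_memLp' hΓ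
  have hmul : Integrable (fun h ↦ (D h).1 * (D h).2 * (2 * (α * β / (w.1 * w.2)))) Γ :=
    (hD₁.integrable_mul hD₂).mul_const _
  have hsq₁ := hD₁.integrable_sq.mul_const (α * (1 - α) / w.1 ^ 2)
  have hsq₂ := hD₂.integrable_sq.mul_const (β * (1 - β) / w.2 ^ 2)
  have hint : ∫ h, fderiv ℝ (fderiv ℝ fun w : ℝ × ℝ ↦ w.1 ^ α * w.2 ^ β) w (D h) (D h) ∂Γ =
      w.1 ^ α * w.2 ^ β * (2 * (α * β * ((∫ h, (D h).1 * (D h).2 ∂Γ) / (w.1 * w.2))) -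
        α * (1 - α) * ((∫ h, (D h).1 ^ 2 ∂Γ) / w.1 ^ 2) -
        β * (1 - β) * ((∫ h, (D h).2 ^ 2 ∂Γ) / w.2 ^ 2)) := by
    have hsub : Integrable (fun h ↦ (D h).1 * (D h).2 * (2 * (α * β / (w.1 * w.2))) -
      (D h).1 ^ 2 * (α * (1 - α) / w.1 ^ 2)) Γ := hmul.sub hsq₁
    calc _ = ∫ h, w.1 ^ α * w.2 ^ β * ((D h).1 * (D h).2 * (2 * (α * β / (w.1 * w.2))) -
          (D h).1 ^ 2 * (α * (1 - α) / w.1 ^ 2) - (D h).2 ^ 2 * (β * (1 - β) / w.2 ^ 2)) ∂Γ := by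
          refine integral_congr_ae (.of_forall fun h ↦ ?_)
          simp only [fderiv_fderiv_rpow_mul_rpow hw₁ hw₂]
          ring
      _ = _ := by
          rw [integral_const_mul, integral_sub hsub hsq₂, integral_sub hmul hsq₁,
            integral_mul_const, integral_mul_const, integral_mul_const]
          ring
  rw [hint]
  refine mul_nonpos_of_nonneg_of_nonpos (by positivity) ?_
  have := two_mul_mul_le_of_sq_le hα hα' hβ hβ' hρ (S := (∫ h, (D h).1 ^ 2 ∂Γ) / w.1 ^ 2)
    (T := (∫ h, (D h).2 ^ 2 ∂Γ) / w.2 ^ 2) (x := (∫ h, (D h).1 * (D h).2 ∂Γ) / (w.1 * w.2))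
    (by positivity) (by positivity) ?_
  · linarith
  · rw [div_pow, mul_pow, div_mul_div_comm, mul_div_assoc']
    gcongr
    exact hcorr D hD

end RpowMulRpow

section Approximation

variable {E E₁ E₂ V : Type*} [NormedAddCommGroup E] [NormedSpace ℝ E] [NormedAddCommGroup E₁]
  [NormedSpace ℝ E₁] [NormedAddCommGroup E₂] [NormedSpace ℝ E₂] [NormedAddCommGroup V]
  [NormedSpace ℝ V]

/-- The differentials of the maps `v ↦ (f (A v), g (B v))`, where `f` and `g` are real functions
whose differentials lie in the balls of radii `R₁` and `R₂` respectively. -/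
def pairDerivs (A : V →L[ℝ] E₁) (B : V →L[ℝ] E₂) (R₁ R₂ : ℝ) : Set (V →L[ℝ] ℝ × ℝ) :=
  (fun ℓ : (E₁ →L[ℝ] ℝ) × (E₂ →L[ℝ] ℝ) ↦ (ℓ.1 ∘L A).prod (ℓ.2 ∘L B)) ''
    (Metric.closedBall 0 R₁ ×ˢ Metric.closedBall 0 R₂)

lemma continuous_clm_prod {X : Type*} [TopologicalSpace X] {φ : X → V →L[ℝ] E₁}
    {ψ : X → V →L[ℝ] E₂} (hφ : Continuous φ) (hψ : Continuous ψ) :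
    Continuous fun x ↦ (φ x).prod (ψ x) :=
  (ContinuousLinearMap.prodₗᵢ ℝ).continuous.comp (hφ.prodMk hψ)

lemma mul_norm_apply_sq_le (A : V →L[ℝ] E) (M : ℝ) (h : V) :
    M * ‖A h‖ ^ 2 ≤ |M| * ‖A‖ ^ 2 * ‖h‖ ^ 2 := by
  calc M * ‖A h‖ ^ 2 ≤ |M| * (‖A‖ * ‖h‖) ^ 2 := by
        gcongr
        exacts [le_abs_self M, A.le_opNorm h]
    _ = _ := by ring

lemma convex_pairDerivs (A : V →L[ℝ] E₁) (B : V →L[ℝ] E₂) (R₁ R₂ : ℝ) :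
    Convex ℝ (pairDerivs A B R₁ R₂) :=
  ((convex_closedBall _ _).prod (convex_closedBall _ _)).is_linear_image
    ⟨fun _ _ ↦ by ext <;> simp, fun _ _ ↦ by ext <;> simp⟩

lemma isCompact_pairDerivs [FiniteDimensional ℝ E₁] [FiniteDimensional ℝ E₂] (A : V →L[ℝ] E₁)
    (B : V →L[ℝ] E₂) (R₁ R₂ : ℝ) : IsCompact (pairDerivs A B R₁ R₂) := by
  have := FiniteDimensional.proper_real (E₁ →L[ℝ] ℝ)
  have := FiniteDimensional.proper_real (E₂ →L[ℝ] ℝ)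
  exact ((isCompact_closedBall _ _).prod (isCompact_closedBall _ _)).image
    (continuous_clm_prod (by fun_prop) (by fun_prop))

lemma isC11With_prodMk {K₁ K₂ : Set ℝ} {R₁ R₂ M₁ M₂ : ℝ} {f : E₁ → ℝ} {g : E₂ → ℝ}
    (hf : IsC11With K₁ (Metric.closedBall 0 R₁) M₁ f)
    (hg : IsC11With K₂ (Metric.closedBall 0 R₂) M₂ g) (A : V →L[ℝ] E₁) (B : V →L[ℝ] E₂) :
    IsC11With (K₁ ×ˢ K₂) (pairDerivs A B R₁ R₂) (|M₁| * ‖A‖ ^ 2 + |M₂| * ‖B‖ ^ 2)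
      fun v ↦ (f (A v), g (B v)) := by
  obtain ⟨D₁, hD₁, hD₁R, hfD⟩ := hf.exists_deriv
  obtain ⟨D₂, hD₂, hD₂R, hgD⟩ := hg.exists_deriv
  refine ⟨(hf.continuous.comp A.continuous).prodMk (hg.continuous.comp B.continuous),
    fun v ↦ ⟨hf.mem _, hg.mem _⟩, fun v ↦ (D₁ (A v) ∘L A).prod (D₂ (B v) ∘L B),
    continuous_clm_prod (by fun_prop) (by fun_prop),
    fun v ↦ ⟨(D₁ (A v), D₂ (B v)), ⟨hD₁R _, hD₂R _⟩, rfl⟩, fun v h ↦ ?_⟩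
  have h₁ := (hfD (A v) (A h)).trans (mul_norm_apply_sq_le A M₁ h)
  have h₂ := (hgD (B v) (B h)).trans (mul_norm_apply_sq_le B M₂ h)
  rw [← map_add] at h₁ h₂
  rw [add_mul]
  exact norm_prod_le_iff.2 ⟨h₁.trans (le_add_of_nonneg_right (by positivity)),
    h₂.trans (le_add_of_nonneg_left (by positivity))⟩

lemma exists_isC11With_of_contDiff {g : E → ℝ} (hg : ContDiff ℝ 2 g) (hg' : HasCompactSupport g)
    {K : Set ℝ} (m : ℝ) (hK : ∀ x, m + g x ∈ K) :
    ∃ R M, IsC11With K (Metric.closedBall 0 R) M fun x ↦ m + g x := by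
  have hd : ContDiff ℝ 1 (fderiv ℝ g) := hg.fderiv_right (by norm_num)
  obtain ⟨R, hR⟩ := hd.continuous.bounded_above_of_compact_support (hg'.fderiv ℝ)
  obtain ⟨L, hL⟩ := hd.lipschitzWith_of_hasCompactSupport (hg'.fderiv ℝ) one_ne_zero
  refine ⟨R, L, by fun_prop, hK, fderiv ℝ g, hd.continuous, by simpa using hR, fun x h ↦ ?_⟩
  simpa using norm_sub_sub_fderiv_le_of_lipschitzOnWith convex_univ
    (fun y _ ↦ (hg.differentiable two_ne_zero y).hasFDerivAt) (hL.lipschitzOnWith (s := Set.univ))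
    (Set.mem_univ x) (Set.mem_univ (x + h))

lemma add_mul_sin_mem_Icc {m R : ℝ} (hR : 0 ≤ R) (t : ℝ) :
    m + R * sin t ∈ Set.Icc (m - R) (m + R) := by
  constructor <;> nlinarith [neg_one_le_sin t, sin_le_one t]

lemma add_mul_sin_arcsin_div {m R y : ℝ} (hy : y ∈ Set.Icc (m - R) (m + R)) :
    m + R * sin (arcsin ((y - m) / R)) = y := by
  obtain ⟨hy₁, hy₂⟩ := hy
  obtain rfl | hR := (show 0 ≤ R by linarith).eq_or_lt
  · linarith
  · rw [sin_arcsin, mul_div_cancel₀ _ hR.ne', add_sub_cancel]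
    · rw [le_div_iff₀ hR]; linarith
    · rw [div_le_one hR]; linarith

variable [FiniteDimensional ℝ E] [MeasurableSpace E] [BorelSpace E]

lemma exists_contDiff_seq_tendsto_ae (μ : Measure E) [IsFiniteMeasure μ] {h : E → ℝ}
    (hh : Integrable h μ) : ∃ g : ℕ → E → ℝ, (∀ k, HasCompactSupport (g k)) ∧
      (∀ k, ContDiff ℝ 2 (g k)) ∧ ∀ᵐ x ∂μ, Tendsto (fun k ↦ g k x) atTop (𝓝 (h x)) := by
  choose g hgc hgs hgh using fun k : ℕ ↦ (memLp_one_iff_integrable.2 hh).exist_eLpNorm_sub_le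
    ENNReal.one_ne_top le_rfl (Nat.one_div_pos_of_nat (α := ℝ) (n := k))
  have hlim : Tendsto (fun k ↦ eLpNorm (g k - h) 1 μ) atTop (𝓝 0) := by
    refine tendsto_of_tendsto_of_tendsto_of_le_of_le tendsto_const_nhds ?_ (fun _ ↦ zero_le)
      fun k ↦ (eLpNorm_sub_comm _ _ _ _).trans_le (hgh k)
    simpa using ENNReal.tendsto_ofReal tendsto_one_div_add_atTop_nhds_zero_nat
  obtain ⟨ns, -, hns⟩ := (tendstoInMeasure_of_tendsto_eLpNorm one_ne_zero
    (fun k ↦ (hgs k).continuous.aestronglyMeasurable) hh.aestronglyMeasurable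
    hlim).exists_seq_tendsto_ae
  exact ⟨fun k ↦ g (ns k), fun k ↦ hgc _, fun k ↦ (hgs _).of_le (by norm_cast), hns⟩

lemma exists_isC11With_seq_tendsto_ae (μ : Measure E) [IsFiniteMeasure μ] {a b : ℝ} {f : E → ℝ}
    (hf : Measurable f) (hb : ∀ x, f x ∈ Set.Icc a b) :
    ∃ F : ℕ → E → ℝ, (∀ k, ∃ R M, IsC11With (Set.Icc a b) (Metric.closedBall 0 R) M (F k)) ∧
      ∀ᵐ x ∂μ, Tendsto (fun k ↦ F k x) atTop (𝓝 (f x)) := by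
  obtain ⟨m, R, rfl, rfl⟩ : ∃ m R, m - R = a ∧ m + R = b :=
    ⟨(a + b) / 2, (b - a) / 2, by ring, by ring⟩
  have hR : 0 ≤ R := by linarith [(hb 0).1, (hb 0).2]
  -- Writing `f = m + R sin h` lets us approximate `h` freely without leaving `[m - R, m + R]`.
  have hh : Integrable (fun x ↦ arcsin ((f x - m) / R)) μ :=
    .of_bound (measurable_arcsin.comp ((hf.sub_const m).div_const R)).aestronglyMeasurable (π / 2)
      (.of_forall fun x ↦ abs_le.2 (arcsin_mem_Icc _))
  obtain ⟨g, hgc, hgs, hgh⟩ := exists_contDiff_seq_tendsto_ae μ hh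
  refine ⟨fun k x ↦ m + R * sin (g k x), fun k ↦ exists_isC11With_of_contDiff
    (contDiff_const.mul (contDiff_sin.comp (hgs k)))
    ((hgc k).comp_left (g := fun t ↦ R * sin t) (by simp)) m fun x ↦ add_mul_sin_mem_Icc hR _, ?_⟩
  filter_upwards [hgh] with x hx
  rw [← add_mul_sin_arcsin_div (hb x)]
  exact (((continuous_sin.tendsto _).comp hx).const_mul R).const_add m

end Approximation

section Nelson

lemma tendsto_integral_rpow_mul_rpow {Ω : Type*} [MeasurableSpace Ω] {μ : Measure Ω}
    [IsFiniteMeasure μ] {α β b : ℝ} (hα : 0 ≤ α) (hβ : 0 ≤ β) {f g : Ω → ℝ} {F G : ℕ → Ω → ℝ}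
    (hF : ∀ k, Measurable (F k)) (hG : ∀ k, Measurable (G k))
    (hFb : ∀ k x, F k x ∈ Set.Icc 0 b) (hGb : ∀ k x, G k x ∈ Set.Icc 0 b)
    (hFf : ∀ᵐ x ∂μ, Tendsto (fun k ↦ F k x) atTop (𝓝 (f x)))
    (hGg : ∀ᵐ x ∂μ, Tendsto (fun k ↦ G k x) atTop (𝓝 (g x))) :
    Tendsto (fun k ↦ ∫ x, F k x ^ α * G k x ^ β ∂μ) atTop (𝓝 (∫ x, f x ^ α * g x ^ β ∂μ)) := by
  refine tendsto_integral_of_dominated_convergence (fun _ ↦ b ^ α * b ^ β)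
    (fun k ↦ (((hF k).pow_const α).mul ((hG k).pow_const β)).aestronglyMeasurable)
    (integrable_const _) (fun k ↦ .of_forall fun x ↦ ?_) ?_
  · obtain ⟨hF₀, hFb⟩ := hFb k x
    obtain ⟨hG₀, hGb⟩ := hGb k x
    rw [norm_of_nonneg (by positivity)]
    have : 0 ≤ b := hF₀.trans hFb
    gcongr
  · filter_upwards [hFf, hGg] with x hFx hGx
    exact (hFx.rpow_const (.inr hα)).mul (hGx.rpow_const (.inr hβ))

variable {V E₁ E₂ : Type*} [NormedAddCommGroup V] [NormedSpace ℝ V] [MeasurableSpace V]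
  [NormedAddCommGroup E₁] [NormedSpace ℝ E₁] [NormedAddCommGroup E₂] [NormedSpace ℝ E₂]

/-- Under the centred measure `Γ`, every linear functional of the random vector `A` has correlation
at most `|ρ|` with every linear functional of the random vector `B`. -/
def HasCorrelationLE (Γ : Measure V) (A : V →L[ℝ] E₁) (B : V →L[ℝ] E₂) (ρ : ℝ) : Prop :=
  ∀ (ℓ₁ : E₁ →L[ℝ] ℝ) (ℓ₂ : E₂ →L[ℝ] ℝ), (∫ h, ℓ₁ (A h) * ℓ₂ (B h) ∂Γ) ^ 2 ≤
    ρ ^ 2 * ((∫ h, ℓ₁ (A h) ^ 2 ∂Γ) * ∫ h, ℓ₂ (B h) ^ 2 ∂Γ)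

variable [BorelSpace V] [SecondCountableTopology V] [CompleteSpace V] {Γ : Measure V} [IsGaussian Γ]
  [FiniteDimensional ℝ E₁] [FiniteDimensional ℝ E₂] {A : V →L[ℝ] E₁} {B : V →L[ℝ] E₂}
  {α β ρ : ℝ}

lemma integral_rpow_mul_rpow_le_of_isC11With (hΓ₀ : ∫ h, h ∂Γ = 0) (hα : 0 ≤ α) (hα' : α ≤ 1)
    (hβ : 0 ≤ β) (hβ' : β ≤ 1) (hρ : α * β * ρ ^ 2 ≤ (1 - α) * (1 - β))
    (hAB : HasCorrelationLE Γ A B ρ) {a b R₁ R₂ M₁ M₂ : ℝ} (ha : 0 < a) {f : E₁ → ℝ} {g : E₂ → ℝ}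
    (hf : IsC11With (Set.Icc a b) (Metric.closedBall 0 R₁) M₁ f)
    (hg : IsC11With (Set.Icc a b) (Metric.closedBall 0 R₂) M₂ g) :
    ∫ h, f (A h) ^ α * g (B h) ^ β ∂Γ ≤ (∫ h, f (A h) ∂Γ) ^ α * (∫ h, g (B h) ∂Γ) ^ β := by
  have hK : IsCompact (Set.Icc a b ×ˢ Set.Icc a b) := isCompact_Icc.prod isCompact_Icc
  have hpos : ∀ w ∈ Set.Icc a b ×ˢ Set.Icc a b, 0 < w.1 ∧ 0 < w.2 :=
    fun w hw ↦ ⟨ha.trans_le hw.1.1, ha.trans_le hw.2.1⟩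
  have hfg := isC11With_prodMk hf hg A B
  have hint := integrable_comp_add_smul (Γ := Γ) hfg.continuous (hfg.isBounded_range hK) 1 0
  simp only [one_smul, zero_add] at hint
  have hconc : IsConcaveAlong Γ (Set.Icc a b ×ˢ Set.Icc a b) (pairDerivs A B R₁ R₂)
      fun w ↦ w.1 ^ α * w.2 ^ β := by
    refine isConcaveAlong_rpow_mul_rpow hα hα' hβ hβ' hρ IsGaussian.memLp_two_id hpos ?_
    rintro _ ⟨ℓ, -, rfl⟩
    exact hAB ℓ.1 ℓ.2
  have hJensen := integral_comp_le_of_isConcaveAlong hΓ₀ hK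
    ((convex_Icc a b).prod (convex_Icc a b)) (isCompact_pairDerivs A B R₁ R₂)
    (convex_pairDerivs A B R₁ R₂)
    (fun w hw ↦ contDiffAt_rpow_mul_rpow (hpos w hw).1 (hpos w hw).2) hconc hfg
  rwa [fst_integral hint, snd_integral hint] at hJensen

variable [MeasurableSpace E₁] [BorelSpace E₁] [MeasurableSpace E₂] [BorelSpace E₂]

lemma integral_rpow_mul_rpow_le_of_mem_Icc (hΓ₀ : ∫ h, h ∂Γ = 0) (hα : 0 ≤ α) (hα' : α ≤ 1)
    (hβ : 0 ≤ β) (hβ' : β ≤ 1) (hρ : α * β * ρ ^ 2 ≤ (1 - α) * (1 - β))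
    (hAB : HasCorrelationLE Γ A B ρ) {a b : ℝ} (ha : 0 < a) {f : E₁ → ℝ} {g : E₂ → ℝ}
    (hf : Measurable f) (hfb : ∀ x, f x ∈ Set.Icc a b) (hg : Measurable g)
    (hgb : ∀ x, g x ∈ Set.Icc a b) :
    ∫ h, f (A h) ^ α * g (B h) ^ β ∂Γ ≤ (∫ h, f (A h) ∂Γ) ^ α * (∫ h, g (B h) ∂Γ) ^ β := by
  obtain ⟨F, hF, hFf⟩ := exists_isC11With_seq_tendsto_ae (Γ.map A) hf hfb
  obtain ⟨G, hG, hGg⟩ := exists_isC11With_seq_tendsto_ae (Γ.map B) hg hgb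
  replace hFf := ae_of_ae_map A.measurable.aemeasurable hFf
  replace hGg := ae_of_ae_map B.measurable.aemeasurable hGg
  choose R₁ M₁ hF using hF
  choose R₂ M₂ hG using hG
  have hFm (k : ℕ) : Measurable fun h ↦ F k (A h) :=
    ((hF k).continuous.comp A.continuous).measurable
  have hGm (k : ℕ) : Measurable fun h ↦ G k (B h) :=
    ((hG k).continuous.comp B.continuous).measurable
  have hbounds {y : ℝ} (hy : y ∈ Set.Icc a b) : y ∈ Set.Icc 0 b := ⟨ha.le.trans hy.1, hy.2⟩
  have hFb (k : ℕ) (h : V) := hbounds ((hF k).mem (A h))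
  have hGb (k : ℕ) (h : V) := hbounds ((hG k).mem (B h))
  have hlimF : Tendsto (fun k ↦ ∫ h, F k (A h) ∂Γ) atTop (𝓝 (∫ h, f (A h) ∂Γ)) := by
    simpa using tendsto_integral_rpow_mul_rpow zero_le_one le_rfl hFm hGm hFb hGb hFf hGg
  have hlimG : Tendsto (fun k ↦ ∫ h, G k (B h) ∂Γ) atTop (𝓝 (∫ h, g (B h) ∂Γ)) := by
    simpa using tendsto_integral_rpow_mul_rpow le_rfl zero_le_one hFm hGm hFb hGb hFf hGg
  exact le_of_tendsto_of_tendsto'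
    (tendsto_integral_rpow_mul_rpow hα hβ hFm hGm hFb hGb hFf hGg)
    ((hlimF.rpow_const (.inr hα)).mul (hlimG.rpow_const (.inr hβ))) fun k ↦
      integral_rpow_mul_rpow_le_of_isC11With hΓ₀ hα hα' hβ hβ' hρ hAB ha (hF k) (hG k)

lemma integral_rpow_mul_rpow_le_of_nonneg (hΓ₀ : ∫ h, h ∂Γ = 0) (hα : 0 ≤ α) (hα' : α ≤ 1)
    (hβ : 0 ≤ β) (hβ' : β ≤ 1) (hρ : α * β * ρ ^ 2 ≤ (1 - α) * (1 - β))
    (hAB : HasCorrelationLE Γ A B ρ) {b : ℝ} {f : E₁ → ℝ} {g : E₂ → ℝ}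
    (hf : Measurable f) (hfb : ∀ x, f x ∈ Set.Icc 0 b) (hg : Measurable g)
    (hgb : ∀ x, g x ∈ Set.Icc 0 b) :
    ∫ h, f (A h) ^ α * g (B h) ^ β ∂Γ ≤ (∫ h, f (A h) ∂Γ) ^ α * (∫ h, g (B h) ∂Γ) ^ β := by
  have hfA : Integrable (fun h ↦ f (A h)) Γ := .of_mem_Icc 0 b
    (hf.comp A.measurable).aemeasurable (.of_forall fun h ↦ hfb _)
  have hgB : Integrable (fun h ↦ g (B h)) Γ := .of_mem_Icc 0 b
    (hg.comp B.measurable).aemeasurable (.of_forall fun h ↦ hgb _)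
  have hshift (y : ℝ) : Tendsto (fun k : ℕ ↦ y + 1 / (k + 1 : ℝ)) atTop (𝓝 y) := by
    simpa using tendsto_one_div_add_atTop_nhds_zero_nat.const_add y
  have hbounds {y : ℝ} (hy : y ∈ Set.Icc 0 b) (k : ℕ) :
      y + 1 / (k + 1 : ℝ) ∈ Set.Icc (1 / (k + 1 : ℝ)) (b + 1) :=
    ⟨le_add_of_nonneg_left hy.1,
      add_le_add hy.2 (div_le_one_of_le₀ (by linarith [k.cast_nonneg (α := ℝ)]) (by positivity))⟩
  have hbounds' {y : ℝ} (hy : y ∈ Set.Icc 0 b) (k : ℕ) : y + 1 / (k + 1 : ℝ) ∈ Set.Icc 0 (b + 1) :=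
    ⟨(by positivity : (0 : ℝ) ≤ 1 / (k + 1)).trans (hbounds hy k).1, (hbounds hy k).2⟩
  refine le_of_tendsto_of_tendsto' (tendsto_integral_rpow_mul_rpow hα hβ
    (fun k ↦ (hf.comp A.measurable).add_const (1 / (k + 1 : ℝ)))
    (fun k ↦ (hg.comp B.measurable).add_const (1 / (k + 1 : ℝ)))
    (fun k h ↦ hbounds' (hfb (A h)) k) (fun k h ↦ hbounds' (hgb (B h)) k)
    (.of_forall fun h ↦ hshift _) (.of_forall fun h ↦ hshift _))
    (((hshift (∫ h, f (A h) ∂Γ)).rpow_const (.inr hα)).mul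
      ((hshift (∫ h, g (B h) ∂Γ)).rpow_const (.inr hβ))) fun k ↦ ?_
  have := integral_rpow_mul_rpow_le_of_mem_Icc hΓ₀ hα hα' hβ hβ' hρ hAB
    (Nat.one_div_pos_of_nat (α := ℝ) (n := k)) (hf.add_const (1 / (k + 1 : ℝ)))
    (fun x ↦ hbounds (hfb x) k) (hg.add_const (1 / (k + 1 : ℝ))) (fun x ↦ hbounds (hgb x) k)
  rw [integral_add hfA (integrable_const _), integral_add hgB (integrable_const _)] at this
  simpa using this

lemma lintegral_rpow_mul_rpow_le_of_le (hΓ₀ : ∫ h, h ∂Γ = 0) (hα : 0 ≤ α) (hα' : α ≤ 1)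
    (hβ : 0 ≤ β) (hβ' : β ≤ 1) (hρ : α * β * ρ ^ 2 ≤ (1 - α) * (1 - β))
    (hAB : HasCorrelationLE Γ A B ρ) {b : ℝ≥0} {f : E₁ → ℝ≥0∞} {g : E₂ → ℝ≥0∞}
    (hf : Measurable f) (hfb : ∀ x, f x ≤ b) (hg : Measurable g) (hgb : ∀ x, g x ≤ b) :
    ∫⁻ h, f (A h) ^ α * g (B h) ^ β ∂Γ ≤ (∫⁻ h, f (A h) ∂Γ) ^ α * (∫⁻ h, g (B h) ∂Γ) ^ β := by
  have hfA : Measurable fun h ↦ f (A h) := hf.comp A.measurable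
  have hgB : Measurable fun h ↦ g (B h) := hg.comp B.measurable
  have hbdd {y : ℝ≥0∞} (hy : y ≤ b) : y.toReal ∈ Set.Icc (0 : ℝ) b :=
    ⟨ENNReal.toReal_nonneg, ENNReal.toReal_le_coe_of_le_coe hy⟩
  have hfin {y : ℝ≥0∞} (hy : y ≤ b) : y ≠ ∞ := ne_top_of_le_ne_top ENNReal.coe_ne_top hy
  have hmul (h : V) : f (A h) ^ α * g (B h) ^ β ≠ ∞ := ENNReal.mul_ne_top
    (ENNReal.rpow_ne_top_of_nonneg hα (hfin (hfb _)))
    (ENNReal.rpow_ne_top_of_nonneg hβ (hfin (hgb _)))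
  have hreal := integral_rpow_mul_rpow_le_of_nonneg hΓ₀ hα hα' hβ hβ' hρ hAB hf.ennreal_toReal
    (fun x ↦ hbdd (hfb x)) hg.ennreal_toReal (fun x ↦ hbdd (hgb x))
  simp only [ENNReal.toReal_rpow, ← ENNReal.toReal_mul] at hreal
  rw [integral_toReal (by fun_prop) (.of_forall fun h ↦ (hmul h).lt_top),
    integral_toReal hfA.aemeasurable (.of_forall fun h ↦ (hfin (hfb _)).lt_top),
    integral_toReal hgB.aemeasurable (.of_forall fun h ↦ (hfin (hgb _)).lt_top),
    ENNReal.toReal_rpow, ENNReal.toReal_rpow, ← ENNReal.toReal_mul] at hreal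
  refine (ENNReal.toReal_le_toReal ?_ ?_).1 hreal
  · refine (lintegral_mono fun h ↦ mul_le_mul' (ENNReal.rpow_le_rpow (hfb _) hα)
      (ENNReal.rpow_le_rpow (hgb _) hβ)).trans_lt ?_ |>.ne
    simpa using ENNReal.mul_lt_top (ENNReal.rpow_lt_top_of_nonneg hα ENNReal.coe_ne_top)
      (ENNReal.rpow_lt_top_of_nonneg hβ ENNReal.coe_ne_top)
  · refine ENNReal.mul_ne_top (ENNReal.rpow_ne_top_of_nonneg hα ?_)
      (ENNReal.rpow_ne_top_of_nonneg hβ ?_)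
    · exact (IsFiniteMeasure.lintegral_lt_top_of_bounded_to_ennreal Γ ⟨b, fun h ↦ hfb _⟩).ne
    · exact (IsFiniteMeasure.lintegral_lt_top_of_bounded_to_ennreal Γ ⟨b, fun h ↦ hgb _⟩).ne

lemma iSup_mul_iSup_of_monotone {u v : ℕ → ℝ≥0∞} (hu : Monotone u) (hv : Monotone v) :
    (⨆ k, u k) * ⨆ k, v k = ⨆ k, u k * v k := by
  refine le_antisymm ?_ (iSup_le fun k ↦ mul_le_mul' (le_iSup u k) (le_iSup v k))
  rw [ENNReal.iSup_mul]
  refine iSup_le fun i ↦ ?_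
  rw [ENNReal.mul_iSup]
  exact iSup_le fun j ↦ le_iSup_of_le (max i j)
    (mul_le_mul' (hu (le_max_left i j)) (hv (le_max_right i j)))

lemma monotone_min_natCast_rpow (hα : 0 ≤ α) (x : ℝ≥0∞) : Monotone fun k : ℕ ↦ min x k ^ α :=
  fun _ _ hij ↦ ENNReal.rpow_le_rpow (min_le_min_left x (Nat.cast_le.2 hij)) hα

lemma iSup_min_natCast_rpow (hα : 0 ≤ α) (x : ℝ≥0∞) : ⨆ k : ℕ, min x k ^ α = x ^ α := by
  refine iSup_eq_of_tendsto (monotone_min_natCast_rpow hα x)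
    ((ENNReal.continuous_rpow_const.tendsto x).comp ?_)
  simpa using tendsto_const_nhds (x := x).min ENNReal.tendsto_nat_nhds_top

theorem lintegral_rpow_mul_rpow_le (hΓ₀ : ∫ h, h ∂Γ = 0) (hα : 0 ≤ α) (hα' : α ≤ 1)
    (hβ : 0 ≤ β) (hβ' : β ≤ 1) (hρ : α * β * ρ ^ 2 ≤ (1 - α) * (1 - β))
    (hAB : HasCorrelationLE Γ A B ρ) {f : E₁ → ℝ≥0∞} {g : E₂ → ℝ≥0∞}
    (hf : Measurable f) (hg : Measurable g) :
    ∫⁻ h, f (A h) ^ α * g (B h) ^ β ∂Γ ≤ (∫⁻ h, f (A h) ∂Γ) ^ α * (∫⁻ h, g (B h) ∂Γ) ^ β := by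
  have hmono : Monotone fun (k : ℕ) h ↦ min (f (A h)) k ^ α * min (g (B h)) k ^ β :=
    fun i j hij h ↦ mul_le_mul' (monotone_min_natCast_rpow hα _ hij)
      (monotone_min_natCast_rpow hβ _ hij)
  calc ∫⁻ h, f (A h) ^ α * g (B h) ^ β ∂Γ
      = ∫⁻ h, ⨆ k : ℕ, min (f (A h)) k ^ α * min (g (B h)) k ^ β ∂Γ := by
        simp only [← iSup_mul_iSup_of_monotone (monotone_min_natCast_rpow hα _)
          (monotone_min_natCast_rpow hβ _), iSup_min_natCast_rpow, hα, hβ]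
    _ = ⨆ k : ℕ, ∫⁻ h, min (f (A h)) k ^ α * min (g (B h)) k ^ β ∂Γ :=
        lintegral_iSup (fun k ↦ by fun_prop) hmono
    _ ≤ (∫⁻ h, f (A h) ∂Γ) ^ α * (∫⁻ h, g (B h) ∂Γ) ^ β := by
        refine iSup_le fun k ↦ (lintegral_rpow_mul_rpow_le_of_le (b := k) hΓ₀ hα hα' hβ hβ' hρ hAB
          (hf.min measurable_const) (fun x ↦ by simp) (hg.min measurable_const)
          (fun x ↦ by simp)).trans ?_
        gcongr <;> exact min_le_left _ _

end Nelson

section HeatMeasure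

variable {E : Type*} [NormedAddCommGroup E] [InnerProductSpace ℝ E]

/-- The law at time `t` of the diffusion with generator the Laplacian: the centred Gaussian measure
with covariance `2 * t` times the identity, a point mass for `t ≤ 0`. -/
noncomputable def heatMeasure (E : Type*) [NormedAddCommGroup E] [InnerProductSpace ℝ E]
    [FiniteDimensional ℝ E] [MeasurableSpace E] (t : ℝ) : Measure E :=
  (stdGaussian E).map (√(2 * t) • ·)

/-- The density of `heatMeasure E t` for `0 < t`. -/
noncomputable def heatKernel (t : ℝ) (x : E) : ℝ :=
  (4 * π * t) ^ (-(Module.finrank ℝ E : ℝ) / 2) * exp (-‖x‖ ^ 2 / (4 * t))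

lemma heatKernel_pos {t : ℝ} (ht : 0 < t) (x : E) : 0 < heatKernel t x := by
  unfold heatKernel
  positivity

@[fun_prop]
lemma continuous_heatKernel (t : ℝ) : Continuous (heatKernel t : E → ℝ) := by
  unfold heatKernel
  fun_prop

variable [FiniteDimensional ℝ E] [MeasurableSpace E] [BorelSpace E]

instance isGaussian_heatMeasure (t : ℝ) : IsGaussian (heatMeasure E t) :=
  isGaussian_map (√(2 * t) • ContinuousLinearMap.id ℝ E)

lemma integral_strongDual_mul_stdGaussian (ℓ ℓ' : StrongDual ℝ E) :
    ∫ x, ℓ x * ℓ' x ∂stdGaussian E =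
      ⟪(InnerProductSpace.toDual ℝ E).symm ℓ, (InnerProductSpace.toDual ℝ E).symm ℓ'⟫ := by
  have h := covarianceBilin_apply (IsGaussian.memLp_two_id (μ := stdGaussian E))
    ((InnerProductSpace.toDual ℝ E).symm ℓ) ((InnerProductSpace.toDual ℝ E).symm ℓ')
  rw [covarianceBilin_stdGaussian, innerSL_apply_apply ℝ] at h
  simpa using h.symm

section

variable {t : ℝ}

lemma integral_id_heatMeasure : ∫ x, x ∂heatMeasure E t = 0 := by
  rw [heatMeasure, integral_map (by fun_prop) (by fun_prop), integral_smul, integral_id_stdGaussian,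
    smul_zero]

lemma integral_strongDual_mul_heatMeasure (ht : 0 ≤ t) (ℓ ℓ' : StrongDual ℝ E) :
    ∫ x, ℓ x * ℓ' x ∂heatMeasure E t =
      2 * t * ⟪(InnerProductSpace.toDual ℝ E).symm ℓ, (InnerProductSpace.toDual ℝ E).symm ℓ'⟫ := by
  rw [heatMeasure, integral_map (by fun_prop) (by fun_prop), ← integral_strongDual_mul_stdGaussian,
    ← integral_const_mul]
  congr with x
  rw [map_smul, map_smul, smul_eq_mul, smul_eq_mul, mul_mul_mul_comm, mul_self_sqrt (by positivity)]

lemma charFun_heatMeasure (ht : 0 ≤ t) (ξ : E) :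
    charFun (heatMeasure E t) ξ = Complex.exp ↑(-t * ‖ξ‖ ^ 2) := by
  rw [heatMeasure, charFun_map_smul, charFun_stdGaussian, norm_smul, norm_of_nonneg (sqrt_nonneg _)]
  norm_cast
  rw [mul_pow, sq_sqrt (by positivity)]
  ring_nf

lemma charFunDual_heatMeasure (ht : 0 ≤ t) (ℓ : StrongDual ℝ E) :
    charFunDual (heatMeasure E t) ℓ = Complex.exp ↑(-t * ‖ℓ‖ ^ 2) := by
  rw [← (InnerProductSpace.toDual ℝ E).symm.norm_map, ← charFun_heatMeasure ht, charFun_apply,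
    charFunDual_apply]
  congr with x
  rw [real_inner_comm, InnerProductSpace.toDual_symm_apply]

lemma integral_heatKernel_mul_cexp (ht : 0 < t) (ξ : E) :
    ∫ x, heatKernel t x * Complex.exp (⟪x, ξ⟫ * Complex.I) = Complex.exp ↑(-t * ‖ξ‖ ^ 2) := by
  have ht' : (t : ℂ) ≠ 0 := by exact_mod_cast ht.ne'
  have hconst : (π / (1 / (4 * t)) : ℂ) ^ (Module.finrank ℝ E / 2 : ℂ) =
      (((4 * π * t) ^ ((Module.finrank ℝ E : ℝ) / 2) : ℝ) : ℂ) := by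
    rw [Complex.ofReal_cpow (by positivity)]
    push_cast
    field_simp
  calc ∫ x, heatKernel t x * Complex.exp (⟪x, ξ⟫ * Complex.I)
      = ∫ x : E, (((4 * π * t) ^ (-(Module.finrank ℝ E : ℝ) / 2) : ℝ) : ℂ) *
          Complex.exp (-(1 / (4 * t) : ℂ) * ‖x‖ ^ 2 + Complex.I * ⟪ξ, x⟫) := by
        congr with x
        rw [heatKernel, Complex.ofReal_mul, Complex.ofReal_exp, mul_assoc, ← Complex.exp_add,
          real_inner_comm]
        push_cast
        ring_nf
    _ = Complex.exp (Complex.I ^ 2 * ‖ξ‖ ^ 2 / (4 * (1 / (4 * t)))) := by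
        rw [integral_const_mul, GaussianFourier.integral_cexp_neg_mul_sq_norm_add
          (by norm_cast; simpa using ht), hconst, ← mul_assoc, ← Complex.ofReal_mul,
          ← rpow_add (by positivity), neg_div, neg_add_cancel, rpow_zero, Complex.ofReal_one,
          one_mul]
    _ = Complex.exp ↑(-t * ‖ξ‖ ^ 2) := by
        rw [Complex.I_sq]
        push_cast
        field_simp

lemma integrable_heatKernel (ht : 0 < t) : Integrable (heatKernel t : E → ℝ) := by
  have h := integral_heatKernel_mul_cexp ht (0 : E)
  simp only [inner_zero_right, Complex.ofReal_zero, zero_mul, Complex.exp_zero, mul_one,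
    norm_zero, ne_eq, OfNat.ofNat_ne_zero, not_false_eq_true, zero_pow, mul_zero] at h
  refine .of_integral_ne_zero fun h₀ ↦ ?_
  simp [integral_complex_ofReal, h₀] at h

theorem heatMeasure_eq_withDensity (ht : 0 < t) :
    heatMeasure E t = volume.withDensity fun x ↦ ENNReal.ofReal (heatKernel t x) := by
  have hfin : IsFiniteMeasure (volume.withDensity fun x : E ↦ ENNReal.ofReal (heatKernel t x)) :=
    isFiniteMeasure_withDensity_ofReal (integrable_heatKernel ht).2
  refine Measure.ext_of_charFun (funext fun ξ ↦ ?_)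
  rw [charFun_heatMeasure ht.le, ← integral_heatKernel_mul_cexp ht, charFun_apply,
    integral_withDensity_eq_integral_toReal_smul (by fun_prop) (by simp)]
  simp_rw [ENNReal.toReal_ofReal (heatKernel_pos ht _).le, Complex.real_smul]

lemma lintegral_heatMeasure (ht : 0 < t) {f : E → ℝ≥0∞} (hf : Measurable f) :
    ∫⁻ x, f x ∂heatMeasure E t = ∫⁻ x, ENNReal.ofReal (heatKernel t x) * f x := by
  rw [heatMeasure_eq_withDensity ht, lintegral_withDensity_eq_lintegral_mul _ (by fun_prop) hf]
  rfl

end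

lemma map_smul_add_heatMeasure_prod (κ : ℝ) {s t : ℝ} (hs : 0 ≤ s) (ht : 0 ≤ t) :
    ((heatMeasure E t).prod (heatMeasure E s)).map (fun p ↦ κ • p.1 + p.2) =
      heatMeasure E (κ ^ 2 * t + s) := by
  let A : E × E →L[ℝ] E := κ • .fst ℝ E E + .snd ℝ E E
  change Measure.map A _ = _
  refine Measure.ext_of_charFunDual (funext fun ℓ ↦ ?_)
  have hinl : (ℓ.comp A).comp (.inl ℝ E E) = κ • ℓ := by ext; simp [A]
  have hinr : (ℓ.comp A).comp (.inr ℝ E E) = ℓ := by ext; simp [A]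
  rw [charFunDual_map, charFunDual_prod, hinl, hinr, charFunDual_heatMeasure ht,
    charFunDual_heatMeasure hs, charFunDual_heatMeasure (by positivity), ← Complex.exp_add,
    norm_smul, mul_pow, Real.norm_eq_abs, sq_abs]
  push_cast
  ring_nf

lemma integral_smul_add_mul_heatMeasure_prod (κ : ℝ) {s t : ℝ} (ht : 0 ≤ t)
    (ℓ ℓ' : StrongDual ℝ E) :
    ∫ p, ℓ (κ • p.1 + p.2) * ℓ' p.1 ∂(heatMeasure E t).prod (heatMeasure E s) =
      κ * (2 * t * ⟪(InnerProductSpace.toDual ℝ E).symm ℓ,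
        (InnerProductSpace.toDual ℝ E).symm ℓ'⟫) := by
  have hℓ (r : ℝ) (ℓ : StrongDual ℝ E) : MemLp ℓ 2 (heatMeasure E r) :=
    ℓ.comp_memLp' IsGaussian.memLp_two_id
  have hmul : Integrable (fun p ↦ ℓ p.1 * ℓ' p.1) ((heatMeasure E t).prod (heatMeasure E s)) :=
    Integrable.comp_fst ((hℓ t ℓ).integrable_mul (hℓ t ℓ')) _
  have hcross : Integrable (fun p ↦ ℓ' p.1 * ℓ p.2) ((heatMeasure E t).prod (heatMeasure E s)) :=
    ((hℓ t ℓ').integrable one_le_two).mul_prod ((hℓ s ℓ).integrable one_le_two)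
  have hmean : ∫ z, ℓ z ∂heatMeasure E s = 0 := by
    rw [ℓ.integral_comp_id_comm IsGaussian.integrable_id, integral_id_heatMeasure, map_zero]
  calc ∫ p, ℓ (κ • p.1 + p.2) * ℓ' p.1 ∂(heatMeasure E t).prod (heatMeasure E s)
      = ∫ p, (κ * (ℓ p.1 * ℓ' p.1) + ℓ' p.1 * ℓ p.2)
          ∂(heatMeasure E t).prod (heatMeasure E s) := by
        congr with p
        rw [map_add, map_smul, smul_eq_mul]
        ring
    _ = κ * ∫ y, ℓ y * ℓ' y ∂heatMeasure E t := by
        rw [integral_add (hmul.const_mul κ) hcross, integral_const_mul, integral_prod_mul, hmean,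
          mul_zero, add_zero, integral_fun_fst (fun y ↦ ℓ y * ℓ' y), probReal_univ, one_smul]
    _ = _ := by rw [integral_strongDual_mul_heatMeasure ht]

lemma hasCorrelationLE_heatMeasure_prod (κ : ℝ) {s t : ℝ} (hs : 0 < s) (ht : 0 ≤ t) :
    HasCorrelationLE ((heatMeasure E t).prod (heatMeasure E s))
      (κ • ContinuousLinearMap.fst ℝ E E + ContinuousLinearMap.snd ℝ E E)
      (ContinuousLinearMap.fst ℝ E E) √(κ ^ 2 * t / (κ ^ 2 * t + s)) := by
  intro ℓ ℓ'
  have hsq : ∫ p, ℓ (κ • p.1 + p.2) ^ 2 ∂(heatMeasure E t).prod (heatMeasure E s) =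
      2 * (κ ^ 2 * t + s) * ‖(InnerProductSpace.toDual ℝ E).symm ℓ‖ ^ 2 := by
    rw [← real_inner_self_eq_norm_sq, ← integral_strongDual_mul_heatMeasure (by positivity),
      ← map_smul_add_heatMeasure_prod κ hs.le ht, integral_map (by fun_prop) (by fun_prop)]
    simp_rw [sq]
  have hsq' : ∫ p : E × E, ℓ' p.1 ^ 2 ∂(heatMeasure E t).prod (heatMeasure E s) =
      2 * t * ‖(InnerProductSpace.toDual ℝ E).symm ℓ'‖ ^ 2 := by
    rw [integral_fun_fst (fun y ↦ ℓ' y ^ 2), probReal_univ, one_smul, ← real_inner_self_eq_norm_sq,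
      ← integral_strongDual_mul_heatMeasure ht]
    simp_rw [sq]
  change (∫ p : E × E, ℓ (κ • p.1 + p.2) * ℓ' p.1 ∂_) ^ 2 ≤
    _ * ((∫ p : E × E, ℓ (κ • p.1 + p.2) ^ 2 ∂_) * ∫ p : E × E, ℓ' p.1 ^ 2 ∂_)
  rw [integral_smul_add_mul_heatMeasure_prod κ ht, hsq, hsq', sq_sqrt (by positivity)]
  set e := (InnerProductSpace.toDual ℝ E).symm ℓ
  set e' := (InnerProductSpace.toDual ℝ E).symm ℓ'
  calc (κ * (2 * t * ⟪e, e'⟫)) ^ 2 = (2 * κ * t) ^ 2 * |⟪e, e'⟫| ^ 2 := by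
        rw [sq_abs]
        ring
    _ ≤ (2 * κ * t) ^ 2 * (‖e‖ * ‖e'‖) ^ 2 := by
        gcongr
        exact abs_real_inner_le_norm e e'
    _ = κ ^ 2 * t / (κ ^ 2 * t + s) *
          (2 * (κ ^ 2 * t + s) * ‖e‖ ^ 2 * (2 * t * ‖e'‖ ^ 2)) := by
        have : 0 < κ ^ 2 * t + s := by positivity
        field_simp

theorem lintegral_lintegral_rpow_mul_rpow_heatMeasure_le {κ s t α β : ℝ} (hs : 0 < s) (ht : 0 ≤ t)
    (hα : 0 ≤ α) (hα' : α ≤ 1) (hβ : 0 ≤ β) (hβ' : β ≤ 1)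
    (hκ : α * β * (κ ^ 2 * t) ≤ (1 - α) * (1 - β) * (κ ^ 2 * t + s)) {f g : E → ℝ≥0∞}
    (hf : Measurable f) (hg : Measurable g) :
    ∫⁻ y, ∫⁻ z, f (κ • y + z) ^ α * g y ^ β ∂heatMeasure E s ∂heatMeasure E t ≤
      (∫⁻ x, f x ∂heatMeasure E (κ ^ 2 * t + s)) ^ α * (∫⁻ y, g y ∂heatMeasure E t) ^ β := by
  have hmean : ∫ p : E × E, p ∂(heatMeasure E t).prod (heatMeasure E s) = 0 := by
    have hint : Integrable (fun p : E × E ↦ p) ((heatMeasure E t).prod (heatMeasure E s)) :=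
      IsGaussian.integrable_id
    ext
    · rw [fst_integral hint, integral_fun_fst (fun y : E ↦ y), integral_id_heatMeasure, smul_zero]
      rfl
    · rw [snd_integral hint, integral_fun_snd (fun y : E ↦ y), integral_id_heatMeasure, smul_zero]
      rfl
  have hρ : α * β * √(κ ^ 2 * t / (κ ^ 2 * t + s)) ^ 2 ≤ (1 - α) * (1 - β) := by
    rw [sq_sqrt (by positivity), ← mul_div_assoc, div_le_iff₀ (by positivity)]
    exact hκ
  have h := lintegral_rpow_mul_rpow_le hmean hα hα' hβ hβ' hρ
    (hasCorrelationLE_heatMeasure_prod κ hs ht) hf hg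
  simp only [add_apply, smul_apply,
    ContinuousLinearMap.coe_fst', ContinuousLinearMap.coe_snd'] at h
  rw [lintegral_prod _ (by fun_prop), ← lintegral_map (f := f) (g := fun p : E × E ↦ κ • p.1 + p.2)
    hf (by fun_prop), map_smul_add_heatMeasure_prod κ hs.le ht] at h
  rwa [← lintegral_map hg measurable_fst, Measure.map_fst_prod, measure_univ, one_smul] at h

end HeatMeasure

section ChangeOfDensity

variable {E : Type*} [NormedAddCommGroup E] [InnerProductSpace ℝ E]

lemma heatKernel_div_heatKernel_rpow {s t : ℝ} (hs : 0 < s) (ht : 0 < t) (θ : ℝ) (x : E) :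
    (heatKernel s x / heatKernel t x) ^ θ =
      ((s / t) ^ θ) ^ (-(Module.finrank ℝ E : ℝ) / 2) *
        exp (-(θ * (‖x‖ ^ 2 / s - ‖x‖ ^ 2 / t)) / 4) := by
  rw [heatKernel, heatKernel, mul_div_mul_comm, ← exp_sub, ← div_rpow (by positivity)
    (by positivity), mul_rpow (by positivity) (exp_pos _).le, ← rpow_mul (by positivity),
    mul_comm _ θ, rpow_mul (by positivity), mul_div_mul_left _ _ (by positivity), ← exp_mul]
  ring_nf

variable {p q u v r a b c : ℝ}

lemma rpow_change_of_density (ha : 0 < a) (hb : 0 < b) (hc : 0 < c) (hu : 0 < u) (hv : 0 < v) :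
    (u / (u * a * c)) ^ (1 / p) * (v / (v * b * c)) ^ (1 - 1 / q) * (v * b * c * (a * r / b)) =
      a ^ (1 - 1 / p) * b ^ (1 / q - 1) * c ^ (1 / q - 1 / p) * (v * r) := by
  rw [show u / (u * a * c) = (a * c)⁻¹ by field_simp,
    show v / (v * b * c) = (b * c)⁻¹ by field_simp, inv_rpow (by positivity),
    inv_rpow (by positivity), mul_rpow ha.le hc.le, mul_rpow hb.le hc.le, rpow_sub ha, rpow_sub hb,
    rpow_sub hb, rpow_sub hc, rpow_sub hc]
  simp only [rpow_one]
  field_simp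

lemma norm_sq_change_of_density (ha : 0 < a) (hb : 0 < b) (hu : 0 < u) (hv : 0 < v) (hr : 0 < r)
    (hap : a * v + 1 = p) (hbq : b * u + 1 = q) (hcr : c * (q - p) = r) (hrpq : u * p - v * q = r)
    (x y : E) :
    1 / p * (‖x‖ ^ 2 / u - ‖x‖ ^ 2 / (u * a * c)) +
        (1 - 1 / q) * (‖y‖ ^ 2 / v - ‖y‖ ^ 2 / (v * b * c)) + ‖y‖ ^ 2 / (v * b * c) +
        ‖x - (a / b) • y‖ ^ 2 / (a * r / b) =
      ‖y‖ ^ 2 / v + ‖x - y‖ ^ 2 / r := by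
  have hp : 0 < p := by rw [← hap]; positivity
  have hq : 0 < q := by rw [← hbq]; positivity
  have hqp : q - p ≠ 0 := right_ne_zero_of_mul (hcr.trans_ne hr.ne')
  obtain rfl : c = r / (q - p) := eq_div_of_mul_eq hqp hcr
  rw [norm_sub_sq_real, norm_sub_sq_real, inner_smul_right, norm_smul, mul_pow, Real.norm_eq_abs,
    sq_abs]
  field_simp
  subst hrpq hap hbq
  ring

lemma heatKernel_change_of_density (ha : 0 < a) (hb : 0 < b) (hc : 0 < c) (hu : 0 < u) (hv : 0 < v)
    (hr : 0 < r) (hap : a * v + 1 = p) (hbq : b * u + 1 = q) (hcr : c * (q - p) = r)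
    (hrpq : u * p - v * q = r) (x y : E) :
    (heatKernel u x / heatKernel (u * a * c) x) ^ (1 / p) *
        (heatKernel v y / heatKernel (v * b * c) y) ^ (1 - 1 / q) *
        (heatKernel (v * b * c) y * heatKernel (a * r / b) (x - (a / b) • y)) =
      (a ^ (1 - 1 / p) * b ^ (1 / q - 1) * c ^ (1 / q - 1 / p)) ^ (-(Module.finrank ℝ E : ℝ) / 2) *
        (heatKernel v y * heatKernel r (x - y)) := by
  rw [heatKernel_div_heatKernel_rpow hu (by positivity),
    heatKernel_div_heatKernel_rpow hv (by positivity)]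
  simp only [heatKernel]
  set N := -(Module.finrank ℝ E : ℝ) / 2
  set A := (u / (u * a * c)) ^ (1 / p)
  set B := (v / (v * b * c)) ^ (1 - 1 / q)
  set M := a ^ (1 - 1 / p) * b ^ (1 / q - 1) * c ^ (1 / q - 1 / p)
  have : 0 < A := by positivity
  have : 0 < B := by positivity
  have : 0 < M := by positivity
  have hpow : A ^ N * B ^ N * (4 * π * (v * b * c)) ^ N * (4 * π * (a * r / b)) ^ N =
      M ^ N * (4 * π * v) ^ N * (4 * π * r) ^ N := by
    have hrpow := rpow_change_of_density (p := p) (q := q) (r := r) ha hb hc hu hv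
    rw [← mul_rpow (by positivity) (by positivity), ← mul_rpow (by positivity) (by positivity),
      ← mul_rpow (by positivity) (by positivity), ← mul_rpow (by positivity) (by positivity),
      ← mul_rpow (by positivity) (by positivity)]
    congr 1
    linear_combination (4 * π) ^ 2 * hrpow
  have hexp : exp (-(1 / p * (‖x‖ ^ 2 / u - ‖x‖ ^ 2 / (u * a * c))) / 4) *
      exp (-((1 - 1 / q) * (‖y‖ ^ 2 / v - ‖y‖ ^ 2 / (v * b * c))) / 4) *
      exp (-‖y‖ ^ 2 / (4 * (v * b * c))) * exp (-‖x - (a / b) • y‖ ^ 2 / (4 * (a * r / b))) =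
      exp (-‖y‖ ^ 2 / (4 * v)) * exp (-‖x - y‖ ^ 2 / (4 * r)) := by
    simp only [← exp_add]
    congr 1
    linear_combination (-1 / 4) * norm_sq_change_of_density ha hb hu hv hr hap hbq hcr hrpq x y
  linear_combination exp (-‖y‖ ^ 2 / (4 * v)) * exp (-‖x - y‖ ^ 2 / (4 * r)) * hpow +
    A ^ N * B ^ N * (4 * π * (v * b * c)) ^ N * (4 * π * (a * r / b)) ^ N * hexp

end ChangeOfDensity

section Duality

lemma lintegral_rpow_rpow_le_of_forall_lintegral_mul_rpow_le {α : Type*} {m : MeasurableSpace α}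
    {μ : Measure α} [IsFiniteMeasure μ] {q : ℝ} (hq : 1 ≤ q) {C : ℝ≥0∞} {w : α → ℝ≥0∞}
    (hw : Measurable w)
    (h : ∀ g : α → ℝ≥0∞, Measurable g →
      ∫⁻ x, w x * g x ^ (1 - 1 / q) ∂μ ≤ C * (∫⁻ x, g x ∂μ) ^ (1 - 1 / q)) :
    (∫⁻ x, w x ^ q ∂μ) ^ (1 / q) ≤ C := by
  have hq₀ : 0 < q := by linarith
  have hθ : 0 ≤ 1 - 1 / q := sub_nonneg.2 ((div_le_one hq₀).2 hq)
  have hsplit (y : ℝ≥0∞) : y ^ (1 / q) * y ^ (1 - 1 / q) = y := by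
    rw [← ENNReal.rpow_add_of_nonneg _ _ (by positivity) hθ, add_sub_cancel, ENNReal.rpow_one]
  have hbound (k : ℕ) : (∫⁻ x, min (w x) k ^ q ∂μ) ^ (1 / q) ≤ C := by
    set I := ∫⁻ x, min (w x) k ^ q ∂μ
    have hI : I ≠ ∞ := ne_of_lt <|
      IsFiniteMeasure.lintegral_lt_top_of_bounded_to_ennreal μ ⟨(k : ℝ≥0) ^ q, fun x ↦ by
        rw [ENNReal.coe_rpow_of_nonneg _ hq₀.le]
        exact ENNReal.rpow_le_rpow (min_le_right _ _) hq₀.le⟩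
    obtain hI₀ | hI₀ := eq_or_ne I 0
    · rw [hI₀, ENNReal.zero_rpow_of_pos (by positivity)]
      exact zero_le
    have hmul : I ^ (1 / q) * I ^ (1 - 1 / q) ≤ C * I ^ (1 - 1 / q) := by
      calc I ^ (1 / q) * I ^ (1 - 1 / q) = I := hsplit I
        _ ≤ ∫⁻ x, w x * (min (w x) k ^ q) ^ (1 - 1 / q) ∂μ := by
            refine lintegral_mono fun x ↦ ?_
            nth_rw 1 [← hsplit (min (w x) k ^ q), ← ENNReal.rpow_mul, mul_one_div_cancel hq₀.ne',
              ENNReal.rpow_one]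
            gcongr
            exact min_le_left _ _
        _ ≤ C * I ^ (1 - 1 / q) := h _ (by fun_prop)
    exact (ENNReal.mul_le_mul_iff_left (ENNReal.rpow_pos (pos_iff_ne_zero.2 hI₀) hI).ne'
      (ENNReal.rpow_ne_top_of_nonneg hθ hI)).1 hmul
  have hsup : ∫⁻ x, w x ^ q ∂μ = ⨆ k : ℕ, ∫⁻ x, min (w x) k ^ q ∂μ := by
    rw [← lintegral_iSup (fun k ↦ by fun_prop) fun i j hij x ↦
      monotone_min_natCast_rpow hq₀.le (w x) hij]
    simp_rw [iSup_min_natCast_rpow hq₀.le]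
  rw [one_div, ENNReal.rpow_inv_le_iff hq₀, hsup]
  exact iSup_le fun k ↦ (ENNReal.rpow_inv_le_iff hq₀).1 (by simpa only [one_div] using hbound k)

end Duality

section HeatFlow

variable {E : Type*} [NormedAddCommGroup E] [InnerProductSpace ℝ E]

/-- The constant `M` of dimensional hypercontractivity, whose power `dim E / 2` bounds the norm of
the heat flow. -/
noncomputable def hypercontractivityConst (p q u v : ℝ) : ℝ :=
  ((p - 1) / v) ^ (1 - 1 / p) * ((q - 1) / u) ^ (1 / q - 1) *
    ((u * p - v * q) / (q - p)) ^ (1 / q - 1 / p)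

variable {p q u v : ℝ}

lemma hypercontractivityConst_pos (hp : 1 < p) (hpq : p < q) (hu : 0 < u) (hv : 0 < v)
    (hr : 0 < u * p - v * q) : 0 < hypercontractivityConst p q u v := by
  have : 0 < p - 1 := by linarith
  have : 0 < q - 1 := by linarith
  have : 0 < q - p := by linarith
  unfold hypercontractivityConst
  positivity

/-- The density of the heat measure at time `s` with respect to the one at time `t`. -/
noncomputable def heatDensity (s t : ℝ) (x : E) : ℝ≥0∞ :=
  ENNReal.ofReal (heatKernel s x / heatKernel t x)

lemma heatDensity_change_of_density {a b c r : ℝ} (ha : 0 < a) (hb : 0 < b)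
    (hc : 0 < c) (hu : 0 < u) (hv : 0 < v) (hr : 0 < r) (hap : a * v + 1 = p) (hbq : b * u + 1 = q)
    (hcr : c * (q - p) = r) (hrpq : u * p - v * q = r) (x y : E) (s t : ℝ≥0∞) :
    ENNReal.ofReal (heatKernel (v * b * c) y * heatKernel (a * r / b) (x - (a / b) • y)) *
        ((heatDensity u (u * a * c) x * s) ^ (1 / p) *
          (heatDensity v (v * b * c) y * t) ^ (1 - 1 / q)) =
      ENNReal.ofReal ((a ^ (1 - 1 / p) * b ^ (1 / q - 1) * c ^ (1 / q - 1 / p)) ^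
          (-(Module.finrank ℝ E : ℝ) / 2)) *
        (ENNReal.ofReal (heatKernel v y * heatKernel r (x - y)) *
          (s ^ (1 / p) * t ^ (1 - 1 / q))) := by
  have hp : 0 < p := by rw [← hap]; positivity
  have hq : 1 ≤ q := by rw [← hbq]; linarith [mul_pos hb hu]
  have hθ : 0 ≤ 1 - 1 / q := sub_nonneg.2 ((div_le_one (by linarith)).2 hq)
  have hx : 0 < heatKernel u x / heatKernel (u * a * c) x :=
    div_pos (heatKernel_pos hu x) (heatKernel_pos (by positivity) x)
  have hy : 0 < heatKernel v y / heatKernel (v * b * c) y :=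
    div_pos (heatKernel_pos hv y) (heatKernel_pos (by positivity) y)
  rw [heatDensity, heatDensity, ENNReal.mul_rpow_of_nonneg _ _ (by positivity),
    ENNReal.mul_rpow_of_nonneg _ _ hθ,
    ENNReal.ofReal_rpow_of_pos hx, ENNReal.ofReal_rpow_of_pos hy, mul_mul_mul_comm,
    ← ENNReal.ofReal_mul (by positivity), ← mul_assoc, mul_comm (ENNReal.ofReal (_ * _)),
    ← ENNReal.ofReal_mul (by positivity),
    heatKernel_change_of_density ha hb hc hu hv hr hap hbq hcr hrpq,
    ENNReal.ofReal_mul (by positivity), mul_assoc]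

variable [MeasurableSpace E] [BorelSpace E]

@[fun_prop]
lemma measurable_heatDensity (s t : ℝ) : Measurable (heatDensity s t : E → ℝ≥0∞) := by
  unfold heatDensity
  fun_prop

variable [FiniteDimensional ℝ E]

lemma lintegral_heatDensity_mul {s t : ℝ} (hs : 0 < s) (ht : 0 < t) {f : E → ℝ≥0∞}
    (hf : Measurable f) :
    ∫⁻ x, heatDensity s t x * f x ∂heatMeasure E t =
      ∫⁻ x, f x ∂heatMeasure E s := by
  rw [lintegral_heatMeasure ht (by fun_prop), lintegral_heatMeasure hs hf]
  congr with x
  rw [heatDensity, ← mul_assoc, ← ENNReal.ofReal_mul (heatKernel_pos ht x).le,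
    mul_div_cancel₀ _ (heatKernel_pos ht x).ne']

lemma lintegral_lintegral_smul_add_heatMeasure (κ : ℝ) {s t : ℝ} (hs : 0 < s) (ht : 0 < t)
    {f : E → E → ℝ≥0∞} (hf : Measurable (Function.uncurry f)) :
    ∫⁻ y, ∫⁻ z, f (κ • y + z) y ∂heatMeasure E s ∂heatMeasure E t =
      ∫⁻ y, ∫⁻ x, ENNReal.ofReal (heatKernel t y * heatKernel s (x - κ • y)) * f x y := by
  have hmeas : Measurable fun p : E × E ↦ f (κ • p.1 + p.2) p.1 :=
    hf.comp (g := Function.uncurry f) (f := fun p : E × E ↦ (κ • p.1 + p.2, p.1)) (by fun_prop)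
  rw [lintegral_heatMeasure ht hmeas.lintegral_prod_right']
  congr with y
  have : Measurable fun x ↦ f x y := hf.of_uncurry_right
  rw [lintegral_heatMeasure hs (by fun_prop), ← lintegral_const_mul _ (by fun_prop),
    ← lintegral_sub_right_eq_self _ (κ • y)]
  congr with x
  rw [add_sub_cancel, ← mul_assoc, ← ENNReal.ofReal_mul (heatKernel_pos ht y).le]

lemma lintegral_lintegral_change_of_density {a b c r : ℝ} (ha : 0 < a) (hb : 0 < b)
    (hc : 0 < c) (hu : 0 < u) (hv : 0 < v) (hr : 0 < r) (hap : a * v + 1 = p) (hbq : b * u + 1 = q)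
    (hcr : c * (q - p) = r) (hrpq : u * p - v * q = r) {f g : E → ℝ≥0∞} (hf : Measurable f)
    (hg : Measurable g) :
    ∫⁻ y, ∫⁻ z, (heatDensity u (u * a * c) ((a / b) • y + z) * f ((a / b) • y + z)) ^ (1 / p) *
          (heatDensity v (v * b * c) y * g y) ^ (1 - 1 / q)
        ∂heatMeasure E (a * r / b) ∂heatMeasure E (v * b * c) =
      ENNReal.ofReal ((a ^ (1 - 1 / p) * b ^ (1 / q - 1) * c ^ (1 / q - 1 / p)) ^
        (-(Module.finrank ℝ E : ℝ) / 2)) *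
        ∫⁻ y, ∫⁻ z, f (y + z) ^ (1 / p) * g y ^ (1 - 1 / q) ∂heatMeasure E r ∂heatMeasure E v := by
  have h := lintegral_lintegral_smul_add_heatMeasure 1 hr hv
    (f := fun x y ↦ f x ^ (1 / p) * g y ^ (1 - 1 / q)) (by fun_prop)
  simp_rw [one_smul] at h
  have hmeas : Measurable fun p' : E × E ↦ ENNReal.ofReal (heatKernel v p'.1 *
      heatKernel r (p'.2 - p'.1)) * (f p'.2 ^ (1 / p) * g p'.1 ^ (1 - 1 / q)) := by
    fun_prop
  rw [lintegral_lintegral_smul_add_heatMeasure (a / b) (by positivity) (by positivity)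
    (f := fun x y ↦ (heatDensity u (u * a * c) x * f x) ^ (1 / p) *
      (heatDensity v (v * b * c) y * g y) ^ (1 - 1 / q))
    (by fun_prop), h, ← lintegral_const_mul _ hmeas.lintegral_prod_right']
  congr with y
  rw [← lintegral_const_mul _ (by fun_prop)]
  congr with x
  exact heatDensity_change_of_density ha hb hc hu hv hr hap hbq hcr hrpq x y _ _

theorem lintegral_lintegral_rpow_mul_rpow_le_of_change_of_density {a b c r : ℝ} (ha : 0 < a)
    (hb : 0 < b) (hc : 0 < c) (hu : 0 < u) (hv : 0 < v) (hr : 0 < r) (hap : a * v + 1 = p)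
    (hbq : b * u + 1 = q) (hcr : c * (q - p) = r) (hrpq : u * p - v * q = r) {f g : E → ℝ≥0∞}
    (hf : Measurable f) (hg : Measurable g) :
    ENNReal.ofReal ((a ^ (1 - 1 / p) * b ^ (1 / q - 1) * c ^ (1 / q - 1 / p)) ^
        (-(Module.finrank ℝ E : ℝ) / 2)) *
        ∫⁻ y, ∫⁻ z, f (y + z) ^ (1 / p) * g y ^ (1 - 1 / q) ∂heatMeasure E r ∂heatMeasure E v ≤
      (∫⁻ x, f x ∂heatMeasure E u) ^ (1 / p) * (∫⁻ y, g y ∂heatMeasure E v) ^ (1 - 1 / q) := by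
  have hp : 1 < p := by rw [← hap]; linarith [mul_pos ha hv]
  have hq : 1 < q := by rw [← hbq]; linarith [mul_pos hb hu]
  have hτ : (a / b) ^ 2 * (v * b * c) + a * r / b = u * a * c := by
    subst hcr hap hbq
    field_simp
    ring
  have hκ : 1 / p * (1 - 1 / q) * ((a / b) ^ 2 * (v * b * c)) =
      (1 - 1 / p) * (1 - (1 - 1 / q)) * ((a / b) ^ 2 * (v * b * c) + a * r / b) := by
    rw [hτ]
    subst hap hbq
    field_simp
    ring
  have h := lintegral_lintegral_rpow_mul_rpow_heatMeasure_le (κ := a / b) (s := a * r / b)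
    (t := v * b * c) (f := fun x : E ↦ heatDensity u (u * a * c) x * f x)
    (g := fun y ↦ heatDensity v (v * b * c) y * g y) (by positivity) (by positivity)
    (by positivity) ((div_le_one (by positivity)).2 hp.le)
    (sub_nonneg.2 ((div_le_one (by positivity)).2 hq.le)) (sub_le_self _ (by positivity))
    hκ.le (by fun_prop) (by fun_prop)
  rwa [lintegral_lintegral_change_of_density ha hb hc hu hv hr hap hbq hcr hrpq hf hg, hτ,
    lintegral_heatDensity_mul hu (by positivity) hf,
    lintegral_heatDensity_mul hv (by positivity) hg] at h

theorem lintegral_lintegral_rpow_mul_rpow_le_hypercontractivityConst (hp : 1 < p) (hpq : p < q)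
    (hu : 0 < u) (hv : 0 < v) (hr : 0 < u * p - v * q) {f g : E → ℝ≥0∞} (hf : Measurable f)
    (hg : Measurable g) :
    ∫⁻ y, ∫⁻ z, f (y + z) ^ (1 / p) * g y ^ (1 - 1 / q)
        ∂heatMeasure E (u * p - v * q) ∂heatMeasure E v ≤
      (∫⁻ x, f x ∂heatMeasure E u) ^ (1 / p) *
        ENNReal.ofReal (hypercontractivityConst p q u v ^ (Module.finrank ℝ E / 2 : ℝ)) *
        (∫⁻ y, g y ∂heatMeasure E v) ^ (1 - 1 / q) := by
  have hM := hypercontractivityConst_pos hp hpq hu hv hr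
  have hqp : 0 < q - p := sub_pos.2 hpq
  have h := lintegral_lintegral_rpow_mul_rpow_le_of_change_of_density (E := E)
    (div_pos (sub_pos.2 hp) hv) (div_pos (sub_pos.2 (hp.trans hpq)) hu) (div_pos hr hqp) hu hv hr
    (by field_simp; ring) (by field_simp; ring) (by field_simp) rfl hf hg
  rw [← hypercontractivityConst, neg_div, rpow_neg hM.le,
    ENNReal.ofReal_inv_of_pos (by positivity)] at h
  have hne : ENNReal.ofReal (hypercontractivityConst p q u v ^ (Module.finrank ℝ E / 2 : ℝ)) ≠ 0 :=
    (ENNReal.ofReal_pos.2 (by positivity)).ne'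
  rw [mul_right_comm, mul_comm _ (ENNReal.ofReal _)]
  exact (ENNReal.inv_mul_le_iff hne ENNReal.ofReal_ne_top).1 h

/-- The heat semigroup acting on nonnegative functions with values in `[0, ∞]`. -/
noncomputable def lheat (t : ℝ) (f : E → ℝ≥0∞) (x : E) : ℝ≥0∞ :=
  ∫⁻ y, f (x + y) ∂heatMeasure E t

@[fun_prop]
lemma measurable_lheat (t : ℝ) {f : E → ℝ≥0∞} (hf : Measurable f) : Measurable (lheat t f) :=
  Measurable.lintegral_prod_right' (f := fun p : E × E ↦ f (p.1 + p.2)) (by fun_prop)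

lemma lheat_eq_lintegral_heatKernel {t : ℝ} (ht : 0 < t) {f : E → ℝ≥0∞} (hf : Measurable f)
    (x : E) : lheat t f x = ∫⁻ y, ENNReal.ofReal (heatKernel t (x - y)) * f y := by
  rw [lheat, lintegral_heatMeasure ht (by fun_prop),
    ← lintegral_add_left_eq_self (fun y ↦ ENNReal.ofReal (heatKernel t (x - y)) * f y) x]
  simp only [heatKernel, sub_add_cancel_left, norm_neg]

theorem lheat_rpow_lheat_rpow_le (hp : 1 < p) (hpq : p < q)
    (hu : 0 < u) (hv : 0 < v) (hr : 0 < u * p - v * q) {f : E → ℝ≥0∞} (hf : Measurable f) (x : E) :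
    lheat v (fun y ↦ lheat (u * p - v * q) f y ^ q) x ^ (1 / q) ≤
      lheat u (fun y ↦ f y ^ p) x ^ (1 / p) *
        ENNReal.ofReal (hypercontractivityConst p q u v ^ (Module.finrank ℝ E / 2 : ℝ)) := by
  refine lintegral_rpow_rpow_le_of_forall_lintegral_mul_rpow_le (hp.trans hpq).le (by fun_prop)
    fun g hg ↦ ?_
  have h := lintegral_lintegral_rpow_mul_rpow_le_hypercontractivityConst hp hpq hu hv hr
    (f := fun z ↦ f (x + z) ^ p) (by fun_prop) hg
  simp_rw [← ENNReal.rpow_mul, mul_one_div_cancel (zero_lt_one.trans hp).ne', ENNReal.rpow_one,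
    ← add_assoc] at h
  calc ∫⁻ y, lheat (u * p - v * q) f (x + y) * g y ^ (1 - 1 / q) ∂heatMeasure E v
      = ∫⁻ y, ∫⁻ z, f (x + y + z) * g y ^ (1 - 1 / q)
          ∂heatMeasure E (u * p - v * q) ∂heatMeasure E v := by
        congr with y
        rw [lheat, lintegral_mul_const _ (by fun_prop)]
    _ ≤ _ := h

end HeatFlow

section Heat

variable {n : ℕ} {t : ℝ}

lemma heat_eq_integral_heatKernel (ht : 0 < t) (f : EuclideanSpace ℝ (Fin n) → ℝ)
    (x : EuclideanSpace ℝ (Fin n)) : heat n t f x = ∫ y, heatKernel t (x - y) * f y := by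
  rw [heat, if_neg ht.ne', ← integral_const_mul]
  congr with y
  rw [heatKernel, finrank_euclideanSpace_fin]
  ring

variable {f : EuclideanSpace ℝ (Fin n) → ℝ}

lemma ofReal_heat_le_lheat (ht : 0 < t) (hf : Measurable f) (hf₀ : 0 ≤ f)
    (x : EuclideanSpace ℝ (Fin n)) :
    ENNReal.ofReal (heat n t f x) ≤ lheat t (fun y ↦ ENNReal.ofReal (f y)) x := by
  rw [heat_eq_integral_heatKernel ht, lheat_eq_lintegral_heatKernel ht (by fun_prop),
    integral_eq_lintegral_of_nonneg_ae
      (.of_forall fun y ↦ mul_nonneg (heatKernel_pos ht _).le (hf₀ y)) (by fun_prop)]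
  simp_rw [← ENNReal.ofReal_mul (heatKernel_pos ht _).le]
  exact ENNReal.ofReal_toReal_le

lemma lheat_ofReal (ht : 0 < t) (hf : Measurable f) (hf₀ : 0 ≤ f) {x : EuclideanSpace ℝ (Fin n)}
    (hfx : Integrable fun y ↦ heatKernel t (x - y) * f y) :
    lheat t (fun y ↦ ENNReal.ofReal (f y)) x = ENNReal.ofReal (heat n t f x) := by
  rw [heat_eq_integral_heatKernel ht, lheat_eq_lintegral_heatKernel ht (by fun_prop),
    ofReal_integral_eq_lintegral_ofReal hfx
      (.of_forall fun y ↦ mul_nonneg (heatKernel_pos ht _).le (hf₀ y))]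
  simp_rw [← ENNReal.ofReal_mul (heatKernel_pos ht _).le]

lemma heat_nonneg (ht : 0 < t) (hf₀ : 0 ≤ f) (x : EuclideanSpace ℝ (Fin n)) : 0 ≤ heat n t f x := by
  rw [heat_eq_integral_heatKernel ht]
  exact integral_nonneg fun y ↦ mul_nonneg (heatKernel_pos ht _).le (hf₀ y)

lemma measurable_heat (ht : 0 < t) (hf : Measurable f) : Measurable (heat n t f) := by
  have hmeas : StronglyMeasurable fun p : EuclideanSpace ℝ (Fin n) × EuclideanSpace ℝ (Fin n) ↦
      heatKernel t (p.1 - p.2) * f p.2 := Measurable.stronglyMeasurable (by fun_prop)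
  rw [funext (heat_eq_integral_heatKernel ht f)]
  exact hmeas.integral_prod_right'.measurable

lemma ofReal_heat_rpow_heat_rpow_le {s q : ℝ} (hs : 0 < s) (ht : 0 < t) (hq : 0 < q)
    (hf : Measurable f) (hf₀ : 0 ≤ f) (x : EuclideanSpace ℝ (Fin n)) :
    ENNReal.ofReal (heat n t (fun y ↦ heat n s f y ^ q) x ^ (1 / q)) ≤
      lheat t (fun y ↦ lheat s (fun z ↦ ENNReal.ofReal (f z)) y ^ q) x ^ (1 / q) := by
  have hs₀ (y) : 0 ≤ heat n s f y ^ q := rpow_nonneg (heat_nonneg hs hf₀ y) q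
  have hmeas := measurable_heat hs hf
  have hle (y) : ENNReal.ofReal (heat n s f y ^ q) ≤
      lheat s (fun z ↦ ENNReal.ofReal (f z)) y ^ q := by
    rw [← ENNReal.ofReal_rpow_of_nonneg (heat_nonneg hs hf₀ y) hq.le]
    gcongr
    exact ofReal_heat_le_lheat hs hf hf₀ y
  rw [← ENNReal.ofReal_rpow_of_nonneg (heat_nonneg ht hs₀ x) (by positivity)]
  gcongr
  exact (ofReal_heat_le_lheat ht (by fun_prop) hs₀ x).trans (lintegral_mono fun y ↦ hle _)

end Heat

theorem dimensional_local_hypercontractivity_heat_general (n : ℕ)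
    (q₁ q₂ : ℝ) (hq₁ : 1 < q₁) (hq : q₁ < q₂)
    (u₁ u₂ : ℝ) (hu₁ : 0 < u₁) (hu₂ : 0 < u₂)
    (hr : 0 < u₁ * q₁ - u₂ * q₂)
    (f : EuclideanSpace ℝ (Fin n) → ℝ) (hf : Measurable f) (hf₀ : 0 ≤ f)
    (x : EuclideanSpace ℝ (Fin n))
    (hfx : Integrable fun y ↦ heatKernel u₁ (x - y) * f y ^ q₁) :
    (heat n u₂ (fun y => heat n (u₁ * q₁ - u₂ * q₂) f y ^ q₂) x) ^ (1 / q₂) ≤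
      (heat n u₁ (fun y => f y ^ q₁) x) ^ (1 / q₁) *
        (((q₁ - 1) / u₂) ^ (1 - 1 / q₁) * ((q₂ - 1) / u₁) ^ (1 / q₂ - 1) *
          ((u₁ * q₁ - u₂ * q₂) / (q₂ - q₁)) ^ (1 / q₂ - 1 / q₁)) ^ ((n : ℝ) / 2) := by
  have hq₁₀ : 0 < q₁ := by linarith
  have hq₂₀ : 0 < q₂ := by linarith
  have hfq₀ (y) : 0 ≤ f y ^ q₁ := rpow_nonneg (hf₀ y) _
  have hu₁f₀ := heat_nonneg hu₁ hfq₀ x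
  have hM := (hypercontractivityConst_pos hq₁ hq hu₁ hu₂ hr).le
  rw [← hypercontractivityConst]
  refine (ENNReal.ofReal_le_ofReal_iff (by positivity)).1 ?_
  calc ENNReal.ofReal (heat n u₂ (fun y ↦ heat n (u₁ * q₁ - u₂ * q₂) f y ^ q₂) x ^ (1 / q₂))
      ≤ lheat u₂ (fun y ↦ lheat (u₁ * q₁ - u₂ * q₂) (fun z ↦ ENNReal.ofReal (f z)) y ^ q₂) x ^
          (1 / q₂) := ofReal_heat_rpow_heat_rpow_le hr hu₂ hq₂₀ hf hf₀ x
    _ ≤ lheat u₁ (fun y ↦ ENNReal.ofReal (f y) ^ q₁) x ^ (1 / q₁) *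
          ENNReal.ofReal (hypercontractivityConst q₁ q₂ u₁ u₂ ^ ((n : ℝ) / 2)) := by
        simpa only [finrank_euclideanSpace_fin] using
          lheat_rpow_lheat_rpow_le hq₁ hq hu₁ hu₂ hr hf.ennreal_ofReal x
    _ = ENNReal.ofReal (heat n u₁ (fun y ↦ f y ^ q₁) x ^ (1 / q₁) *
          hypercontractivityConst q₁ q₂ u₁ u₂ ^ ((n : ℝ) / 2)) := by
        simp_rw [ENNReal.ofReal_rpow_of_nonneg (hf₀ _) hq₁₀.le]
        rw [lheat_ofReal hu₁ (by fun_prop) hfq₀ hfx,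
          ENNReal.ofReal_rpow_of_nonneg hu₁f₀ (by positivity), ENNReal.ofReal_mul (by positivity)]

theorem dimensional_local_hypercontractivity_heat (n : ℕ) (hn : 1 ≤ n)
    (q₁ q₂ : ℝ) (hq₁ : 1 < q₁) (hq : q₁ < q₂)
    (u₁ u₂ : ℝ) (hu₁ : 0 < u₁) (hu₂ : 0 < u₂)
    (hr : 0 < u₁ * q₁ - u₂ * q₂)
    (f : EuclideanSpace ℝ (Fin n) → ℝ) (hf : Measurable f)
    (a b : ℝ) (ha : 0 < a) (hab : ∀ x, a ≤ f x ∧ f x ≤ b)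
    (x : EuclideanSpace ℝ (Fin n)) :
    (heat n u₂ (fun y => heat n (u₁ * q₁ - u₂ * q₂) f y ^ q₂) x) ^ (1 / q₂) ≤
      (heat n u₁ (fun y => f y ^ q₁) x) ^ (1 / q₁) *
        (((q₁ - 1) / u₂) ^ (1 - 1 / q₁) * ((q₂ - 1) / u₁) ^ (1 / q₂ - 1) *
          ((u₁ * q₁ - u₂ * q₂) / (q₂ - q₁)) ^ (1 / q₂ - 1 / q₁)) ^ ((n : ℝ) / 2) := by
  have hf₀ (y) : 0 ≤ f y := ha.le.trans (hab y).1
  refine dimensional_local_hypercontractivity_heat_general n q₁ q₂ hq₁ hq u₁ u₂ hu₁ hu₂ hr f hf hf₀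
    x (((integrable_heatKernel hu₁).comp_sub_left x).mul_bdd (c := b ^ q₁)
      (hf.pow_const q₁).aestronglyMeasurable (.of_forall fun y ↦ ?_))
  rw [norm_of_nonneg (rpow_nonneg (hf₀ y) _)]
  exact rpow_le_rpow (hf₀ y) (hab y).2 (by linarith)
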